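/- Let T be an r-row rectangular fluctuating tableau with t := Σ_j |c_j| ≥ 1, and write std(T) = (μ^0, μ^1, …, μ^t). For every 1 ≤ i ≤ r−1 and a ∈ {1,…,t}: a is an antiexcedance of the permutation prom_i(T) if and only if either μ^a = μ^{a−1} + e_j for some j ≤ i (the a-th step of std(T) adds a box in one of the top i rows), or μ^a = μ^{a−1} − e_j for some j > i (the a-th step removes a box from one of the bottom r−i rows). In particular, if T is a rectangular standard tableau (type (1,1,…,1)), then the antiexcedances of prom_i(T) are exactly the entries appearing in the first i rows of T. -/

import Mathlib

open scoped Classical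

noncomputable section

namespace FT

/-- A (raw) `r`-row integer vector; generalized partitions are the antitone ones. -/
abbrev GP (r : ℕ) := Fin r → ℤ

/-- The weakly decreasing rearrangement of a tuple. -/
def sortDesc {r : ℕ} (α : GP r) : GP r := fun i => (α ∘ Tuple.sort α) i.rev

/-- Standard basis vector (0-indexed). -/
def eV {r : ℕ} (a : Fin r) : GP r := fun i => if i = a then 1 else 0

/-- Standard basis vector with 1-indexed row `a` (zero if out of range). -/
def eN (r : ℕ) (a : ℕ) : GP r := fun i => if (i : ℕ) + 1 = a then 1 else 0

/-- Indicator vector of a set of rows. -/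
def indV {r : ℕ} (S : Finset (Fin r)) : GP r := fun i => if i ∈ S then 1 else 0

/-- `colStep r c μ λ`: `λ` is obtained from `μ` by adding (if `c ≥ 0`) or removing
(if `c ≤ 0`) a skew column of `|c|` boxes. -/
def colStep (r : ℕ) (c : ℤ) (μ lam : GP r) : Prop :=
  ∃ S : Finset (Fin r), S.card = c.natAbs ∧
    (if 0 ≤ c then lam = μ + indV S else lam = μ - indV S)

/-- Skew fluctuating tableau of length `n` and type `c` (recorded at indices `0,…,n`;
values of `T` and `c` beyond those indices are irrelevant). -/
def IsSkewFT (r n : ℕ) (T : ℕ → GP r) (c : ℕ → ℤ) : Prop :=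
  (∀ k ≤ n, Antitone (T k)) ∧ ∀ j < n, colStep r (c j) (T j) (T (j + 1))

/-- (Non-skew) fluctuating tableau: starts at the empty shape. -/
def IsFT (r n : ℕ) (T : ℕ → GP r) (c : ℕ → ℤ) : Prop :=
  IsSkewFT r n T c ∧ T 0 = 0

/-- Rectangular: the final shape is constant. -/
def Rect (r n : ℕ) (T : ℕ → GP r) : Prop := ∃ m : ℤ, ∀ i, T n i = m

/-- Bender–Knuth involution `BK_i` (for `1 ≤ i ≤ n-1`). -/
def BK {r : ℕ} (i : ℕ) (T : ℕ → GP r) : ℕ → GP r :=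
  fun k => if k = i then sortDesc (T (i + 1) + T (i - 1) - T i) else T k

/-- `BKseg a m = BK (a+m-1) ∘ ⋯ ∘ BK a` (apply `BK a` first). -/
def BKseg {r : ℕ} (a : ℕ) : ℕ → (ℕ → GP r) → ℕ → GP r
  | 0 => id
  | m + 1 => BK (a + m) ∘ BKseg a m

/-- Promotion `P = BK_{n-1} ∘ ⋯ ∘ BK_1` on length-`n` tableaux. -/
def promo {r : ℕ} (n : ℕ) (T : ℕ → GP r) : ℕ → GP r := BKseg 1 (n - 1) T

/-- `BKsegRev a m = BK a ∘ ⋯ ∘ BK (a+m-1)` (apply `BK (a+m-1)` first). -/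
def BKsegRev {r : ℕ} (a : ℕ) : ℕ → (ℕ → GP r) → ℕ → GP r
  | 0 => id
  | m + 1 => BKsegRev a m ∘ BK (a + m)

/-- Inverse of promotion: `P⁻¹ = BK_1 ∘ ⋯ ∘ BK_{n-1}`. -/
def promoInv {r : ℕ} (n : ℕ) (T : ℕ → GP r) : ℕ → GP r := BKsegRev 1 (n - 1) T

def evacAux {r : ℕ} : ℕ → (ℕ → GP r) → ℕ → GP r
  | 0, T => T
  | m + 1, T => evacAux m (BKseg 1 (m + 1) T)

/-- Evacuation `E = BK_1 ∘ (BK_2∘BK_1) ∘ ⋯ ∘ (BK_{n-1}∘⋯∘BK_1)`. -/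
def evac {r : ℕ} (n : ℕ) (T : ℕ → GP r) : ℕ → GP r := evacAux (n - 1) T

def devacAux {r : ℕ} (n : ℕ) : ℕ → (ℕ → GP r) → ℕ → GP r
  | 0, T => T
  | m + 1, T => BKseg (n - (m + 1)) (m + 1) (devacAux n m T)

/-- Dual evacuation `E* = (BK_{n-1}∘⋯∘BK_1) ∘ (BK_{n-1}∘⋯∘BK_2) ∘ ⋯ ∘ BK_{n-1}`. -/
def devac {r : ℕ} (n : ℕ) (T : ℕ → GP r) : ℕ → GP r := devacAux n (n - 1) T

/-- `rev(-v)`. -/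
def revNeg {r : ℕ} (v : GP r) : GP r := fun i => - v i.rev

/-- Time reversal `τ`. -/
def tauT {r : ℕ} (n : ℕ) (T : ℕ → GP r) : ℕ → GP r := fun k => T (n - k)

/-- `ϖ`. -/
def varpiT {r : ℕ} (T : ℕ → GP r) : ℕ → GP r := fun k => revNeg (T k)

/-- `ε`. -/
def epsT {r : ℕ} (n : ℕ) (T : ℕ → GP r) : ℕ → GP r := fun k => revNeg (T (n - k))

/-- Sign of the `j`-th step of `T` (paper indexing: step `j` goes from `λ^{j-1}` to `λ^j`). -/
def sgnStep {r : ℕ} (T : ℕ → GP r) (j : ℕ) : ℤ :=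
  if T j = T (j - 1) then 0 else if T (j - 1) ≤ T j then 1 else -1

/-- The switch involution `toggle_j` (paper indexing, `1 ≤ j ≤ n`). -/
def toggleT {r : ℕ} (j : ℕ) (T : ℕ → GP r) : ℕ → GP r :=
  fun m => if m < j then T m else fun i => T m i - sgnStep T j

/-- Number of boxes added/removed in the step from `T j` to `T (j+1)`. -/
def stepSize {r : ℕ} (T : ℕ → GP r) (j : ℕ) : ℕ :=
  (Finset.univ.filter fun i : Fin r => T (j + 1) i ≠ T j i).card

/-- Cumulative step sizes: position of `T j` inside the oscillization. -/
def cum {r : ℕ} (T : ℕ → GP r) (j : ℕ) : ℕ := ∑ j' ∈ Finset.range j, stepSize T j'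

/-- The `j`-th intermediate shape of the oscillization of the skew-column step `μ → λ`:
boxes are added smallest-row-first and removed largest-row-first. -/
def oscStep {r : ℕ} (μ lam : GP r) (j : ℕ) : GP r := fun i =>
  let S := Finset.univ.filter fun i' : Fin r => lam i' ≠ μ i'
  if i ∈ S ∧ (if μ i < lam i then (S.filter fun i' => i' ≤ i).card ≤ j
              else (S.filter fun i' => i ≤ i').card ≤ j)
  then lam i else μ i

/-- Largest index `j ≤ n` with `cum T j ≤ k`. -/
def stdIdx {r : ℕ} (n : ℕ) (T : ℕ → GP r) (k : ℕ) : ℕ :=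
  ((Finset.range (n + 1)).filter fun j => cum T j ≤ k).sup id

/-- The oscillization `std(T)` of a length-`n` tableau, a tableau of length `t = Σ|c_j|`. -/
def stdT {r : ℕ} (n : ℕ) (T : ℕ → GP r) : ℕ → GP r := fun k =>
  if stdIdx n T k = n then T n
  else oscStep (T (stdIdx n T k)) (T (stdIdx n T k + 1)) (k - cum T (stdIdx n T k))

/-- Rows of the promotion–evacuation growth diagram: `PE t S u` is `P^u(S)`
for a length-`t` (oscillating) tableau `S`. -/
def PE {r : ℕ} (t : ℕ) (S : ℕ → GP r) (u : ℕ) : ℕ → GP r := (promo t)^[u] S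

/-- `i ∈ {1,…,r-1}` is recorded at cell `(u,v)` of the growth diagram of `S`
(rows 1-indexed; `λ^{u,v} = P^u(S)(v-u)`). -/
def recorded (r t : ℕ) (S : ℕ → GP r) (i u v : ℕ) : Prop :=
  ∃ a b : Fin r,
    (PE t S (u - 1) (v - u) = PE t S u (v - u - 1) + eV a ∧
     PE t S (u - 1) (v - u + 1) = PE t S u (v - u) + eV b ∧
     (a : ℕ) < i ∧ i ≤ (b : ℕ))
    ∨
    (PE t S u (v - u - 1) = PE t S (u - 1) (v - u) + eV a ∧
     PE t S u (v - u) = PE t S (u - 1) (v - u + 1) + eV b ∧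
     (b : ℕ) < i ∧ i ≤ (a : ℕ))

/-- `i ∈ PM(T)_{u,v}` for an off-diagonal entry of the promotion matrix of `T`
(`u, v ∈ {1,…,t}`, `1 ≤ i ≤ r-1`), using the oscillization `std(T)`. -/
def PMmem (r n t : ℕ) (T : ℕ → GP r) (i u v : ℕ) : Prop :=
  1 ≤ u ∧ u ≤ t ∧ 1 ≤ v ∧ v ≤ t ∧ u ≠ v ∧ 1 ≤ i ∧ i ≤ r - 1 ∧
    recorded r t (stdT n T) i u (if u < v then v else v + t)

/-- Graph of the partial promotion function `prom_i(T)`: `prom_i(T)(u) = v`.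
By convention `prom_0 = prom_r = id` on `{1,…,t}`. -/
def promRel (r n t : ℕ) (T : ℕ → GP r) (i u v : ℕ) : Prop :=
  if i = 0 ∨ i = r then 1 ≤ u ∧ u ≤ t ∧ u = v else PMmem r n t T i u v

/-- Sum of the first `i` entries (1-indexed prefix sums). -/
def pSum {r : ℕ} (v : GP r) (i : ℕ) : ℤ :=
  ∑ j ∈ Finset.univ.filter (fun j : Fin r => (j : ℕ) < i), v j

/-- The filled oscillized local-rule grid: row index `k` counts down from the top row
(`k = 0` is `std(λ → ν)`), column index `q` goes right; the left column is
`std(κ → λ)` read so that `grid cA κ λ ν k 0 = std(κ→λ)` at position `cA - k`. -/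
def grid {r : ℕ} (cA : ℕ) (κ lam ν : GP r) : ℕ → ℕ → GP r
  | 0, q => oscStep lam ν q
  | k + 1, 0 => oscStep κ lam (cA - (k + 1))
  | k + 1, q + 1 =>
      sortDesc (grid cA κ lam ν k (q + 1) + grid cA κ lam ν (k + 1) q -
        grid cA κ lam ν k q)
  termination_by k q => (k, q)

/-- 1-indexed entry of a vector (0 if out of range). -/
def ent {r : ℕ} (v : GP r) (h : ℕ) : ℤ := if hh : h - 1 < r then v ⟨h - 1, hh⟩ else 0

/-- The chain `j_0 = 1, j_h = ` least `h`-balance point of the lattice word of `T`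
weakly after `j_{h-1}` (in `{1,…,n}`), `none` once undefined. An index `j` is an
`h`-balance point iff `(T j)_h = (T j)_{h+1}` (1-indexed rows). -/
def jChain (r n : ℕ) (T : ℕ → GP r) : ℕ → Option ℕ
  | 0 => some 1
  | h + 1 =>
    match jChain r n T h with
    | none => none
    | some jp =>
      if H : ∃ j, jp ≤ j ∧ j ≤ n ∧ ent (T j) (h + 1) = ent (T j) (h + 2) then
        some (Nat.find H)
      else none

/-- `k`: the largest `h ≤ r-1` such that `j_1, …, j_h` are all defined. -/
def kVal (r n : ℕ) (T : ℕ → GP r) : ℕ :=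
  ((Finset.range r).filter fun h => (jChain r n T h).isSome).sup id

/-- `j_h`, defaulting to `0` when undefined. -/
def jval (r n : ℕ) (T : ℕ → GP r) (h : ℕ) : ℕ := (jChain r n T h).getD 0

/-- `ω_c` for `c ∈ {0,±1,…,±r}`: top-justified column of `c` ones if `c ≥ 0`,
bottom-justified column of `|c|` minus-ones if `c < 0`. -/
def omegaGP (r : ℕ) (c : ℤ) : GP r := fun i =>
  if 0 ≤ c then (if (i : ℕ) < c.natAbs then 1 else 0)
  else (if r - c.natAbs ≤ (i : ℕ) then -1 else 0)

/-- The extremal fluctuating tableau of type `c`: partial sums of the `ω_{c_j}`. -/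
def extremal (r : ℕ) (c : ℕ → ℤ) (k : ℕ) : GP r := ∑ j ∈ Finset.range k, omegaGP r (c j)

/-- Lexicographic order: the first nonzero entry of `β - α` is positive. -/
def ltLex {r : ℕ} (α β : GP r) : Prop := ∃ i : Fin r, (∀ j, j < i → α j = β j) ∧ α i < β i

/-- Cumulative sums of `|c_j|` (block boundaries). -/
def cumC (c : ℕ → ℤ) (j : ℕ) : ℕ := ∑ j' ∈ Finset.range j, (c j').natAbs

/-- Entry `(u,v)` (for `u,v ∈ {1,…,n}`) of the reduced promotion matrix `PMr^i(T)`: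
the number of cells in the block `B_u × B_v` whose promotion-matrix entry contains `i`. -/
def PMr (r n t : ℕ) (T : ℕ → GP r) (c : ℕ → ℤ) (i u v : ℕ) : ℕ :=
  (((Finset.Icc (cumC c (u - 1) + 1) (cumC c u)) ×ˢ
    (Finset.Icc (cumC c (v - 1) + 1) (cumC c v))).filter
      fun p => PMmem r n t T i p.1 p.2).card

/-- The set of `r`-row fluctuating tableaux of length `n`, shape `lam`, type `c`,
in bundled (finitely-indexed) form. -/
def FTset (r n : ℕ) (lam : GP r) (c : Fin n → ℤ) : Set (Fin (n + 1) → GP r) :=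
  {T | (∀ k, Antitone (T k)) ∧ T 0 = 0 ∧ T (Fin.last n) = lam ∧
       ∀ j : Fin n, colStep r (c j) (T j.castSucc) (T j.succ)}


/-! ### Discrete Pitman transforms -/

abbrev Pth := ℕ → ℕ → ℤ

/-- running minimum -/
def rm (f : ℕ → ℤ) : ℕ → ℤ
  | 0 => f 0
  | k + 1 => min (rm f k) (f (k + 1))

def al (i : ℕ) (η : Pth) : ℕ → ℤ := fun k => η k i - η k (i + 1)

def Pit (i : ℕ) (η : Pth) : Pth := fun k j =>
  if j = i then η k j - rm (al i η) k else if j = i + 1 then η k j + rm (al i η) k else η k j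

def UU (η : Pth) : Prop := (∀ j, η 0 j = 0) ∧
  ∀ k, (∀ j, η (k + 1) j - η k j = 0 ∨ η (k + 1) j - η k j = 1) ∨
    (∀ j, η (k + 1) j - η k j = 0 ∨ η (k + 1) j - η k j = -1)

lemma rm_le (f : ℕ → ℤ) (k : ℕ) : rm f k ≤ f k := by
  cases k with
  | zero => simp [rm]
  | succ k => simp [rm]

lemma rm_anti (f : ℕ → ℤ) (k : ℕ) : rm f (k + 1) ≤ rm f k := by simp [rm]

lemma rm_antitone (f : ℕ → ℤ) : Antitone (rm f) := antitone_nat_of_succ_le (rm_anti f)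

lemma rm_ge (f : ℕ → ℤ) (k : ℕ) (c : ℤ) (h : ∀ s ≤ k, c ≤ f s) : c ≤ rm f k := by
  induction k with
  | zero => simpa [rm] using h 0 le_rfl
  | succ k ih =>
    simp only [rm, le_min_iff]
    exact ⟨ih fun s hs => h s (by omega), h _ le_rfl⟩

lemma rm_congr (f g : ℕ → ℤ) (k : ℕ) (h : ∀ s ≤ k, f s = g s) : rm f k = rm g k := by
  induction k with
  | zero => simpa [rm] using h 0 le_rfl
  | succ k ih =>
    simp only [rm]
    rw [ih fun s hs => h s (by omega), h _ le_rfl]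

lemma Pit_congr (i : ℕ) (η ξ : Pth) (k : ℕ) (h : ∀ s ≤ k, η s = ξ s) :
    ∀ s ≤ k, Pit i η s = Pit i ξ s := by
  intro s hs
  have : rm (al i η) s = rm (al i ξ) s :=
    rm_congr _ _ _ fun u hu => by simp only [al, h u (hu.trans hs)]
  funext j
  simp only [Pit, this, h s hs]

lemma al_self (i : ℕ) (η : Pth) : al i (Pit i η) = fun k => al i η k - 2 * rm (al i η) k := by
  funext k; simp [al, Pit]; unfold al; ring

lemma al_succ (i : ℕ) (η : Pth) : al (i + 1) (Pit i η) = fun k => al (i + 1) η k + rm (al i η) k := by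
  funext k
  have h1 : i + 1 + 1 ≠ i := by omega
  simp [al, Pit, h1]; unfold al; ring

lemma al_pred (i : ℕ) (η : Pth) :
    al i (Pit (i + 1) η) = fun k => al i η k + rm (al (i + 1) η) k := by
  funext k
  have h1 : i ≠ i + 1 + 1 := by omega
  simp [al, Pit, h1]; unfold al; ring

lemma al_far (i j : ℕ) (η : Pth) (h : i + 1 < j ∨ j + 1 < i) : al i (Pit j η) = al i η := by
  funext k
  simp only [al, Pit]
  have h1 : i ≠ j := by omega
  have h2 : i ≠ j + 1 := by omega
  have h3 : i + 1 ≠ j := by omega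
  simp [h1, h2, h3]

lemma al_zero {η : Pth} (h : UU η) (i : ℕ) : al i η 0 = 0 := by
  simp [al, h.1]

lemma al_step {η : Pth} (h : UU η) (i k : ℕ) :
    al i η k - 1 ≤ al i η (k + 1) ∧ al i η (k + 1) ≤ al i η k + 1 := by
  simp only [al]
  rcases h.2 k with h | h <;> have h1 := h i <;> have h2 := h (i + 1) <;> omega

lemma Pit_UU {η : Pth} (h : UU η) (i : ℕ) : UU (Pit i η) := by
  refine ⟨fun j => ?_, fun k => ?_⟩
  · simp [Pit, rm, al_zero h, h.1]
  · have hle := rm_le (al i η) k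
    have e1 : al i η (k+1) = η (k+1) i - η (k+1) (i+1) := rfl
    have e0 : al i η k = η k i - η k (i+1) := rfl
    rcases h.2 k with h | h
    · left
      intro j
      have h1 := h i
      have h2 := h (i + 1)
      have h3 := h j
      simp only [Pit, rm]
      split_ifs with a b
      · subst a; omega
      · subst b; omega
      · omega
    · right
      intro j
      have h1 := h i
      have h2 := h (i + 1)
      have h3 := h j
      simp only [Pit, rm]
      split_ifs with a b
      · subst a; omega
      · subst b; omega
      · omega

lemma rm_zero_of_nonneg (f : ℕ → ℤ) (h0 : f 0 = 0) (k : ℕ) (h : ∀ s ≤ k, 0 ≤ f s) : rm f k = 0 := by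
  apply le_antisymm
  · have := rm_antitone f (Nat.zero_le k)
    simpa [rm, h0] using this
  · exact rm_ge _ _ _ h

lemma Pit_dom {η : Pth} (h0 : ∀ j, η 0 j = 0) (i : ℕ) (h : ∀ k, 0 ≤ al i η k) : Pit i η = η := by
  funext k j
  have : rm (al i η) k = 0 := rm_zero_of_nonneg _ (by simp [al, h0]) _ fun s _ => h s
  simp [Pit, this]

lemma Pit_idem {η : Pth} (h : UU η) (i : ℕ) : Pit i (Pit i η) = Pit i η := by
  apply Pit_dom (Pit_UU h i).1
  intro k
  rw [al_self]
  have h1 := rm_le (al i η) k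
  have h2 := rm_antitone (al i η) (Nat.zero_le k)
  simp only [rm, al_zero h] at h2
  simp only
  omega

lemma Pit_comm (η : Pth) (i j : ℕ) (h : i + 1 < j) : Pit i (Pit j η) = Pit j (Pit i η) := by
  funext k x
  have e1 : al i (Pit j η) = al i η := al_far i j η (Or.inl h)
  have e2 : al j (Pit i η) = al j η := al_far j i η (Or.inr h)
  simp only [Pit]
  rw [e1, e2]
  split_ifs <;> omega

lemma braid_core (A B : ℕ → ℤ) (hA0 : A 0 = 0) (hB0 : B 0 = 0)
    (hA : ∀ k, A k - 1 ≤ A (k + 1) ∧ A (k + 1) ≤ A k + 1) (k : ℕ) :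
    rm (fun k => A k - 2 * rm A k + rm (fun k => B k + rm A k) k) k =
      rm (fun k => A k + rm B k) k - rm A k ∧
    (rm (fun k => B k + rm A k) k = rm A k + rm B k ∨
      rm (fun k => A k + rm B k) k = rm A k + rm B k) ∧
    rm A k + rm B k ≤ rm (fun k => B k + rm A k) k ∧
    rm A k + rm B k ≤ rm (fun k => A k + rm B k) k := by
  induction k with
  | zero => simp [rm, hA0, hB0]
  | succ k ih =>
    have a1 := rm_le A k
    have a2 := rm_le B k
    have a3 := rm_le (fun k => B k + rm A k) k
    have a4 := rm_le (fun k => A k + rm B k) k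
    have a5 := hA k
    simp only [rm] at *
    generalize rm (fun k => A k - 2 * rm A k + rm (fun k => B k + rm A k) k) k = Z at *
    generalize rm (fun k => B k + rm A k) k = Y at *
    generalize rm (fun k => A k + rm B k) k = Y' at *
    generalize rm A k = X at *
    generalize rm B k = X' at *
    generalize A (k+1) = A1 at *
    generalize A k = A0 at *
    generalize B (k+1) = B1 at *
    generalize B k = B0 at *
    obtain ⟨rfl, h2, h3, h4⟩ := ih
    rcases le_total X A1 with c | c
    · rw [min_eq_left c]
      rcases le_total X' B1 with d | d
      · rw [min_eq_left d]; omega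
      · rw [min_eq_right d]; omega
    · rw [min_eq_right c]
      rcases le_total X' B1 with d | d
      · rw [min_eq_left d]; omega
      · rw [min_eq_right d]; omega

lemma Pit_braid {η : Pth} (h : UU η) (i : ℕ) :
    Pit i (Pit (i + 1) (Pit i η)) = Pit (i + 1) (Pit i (Pit (i + 1) η)) := by
  have e1 : al (i+1) (Pit i η) = fun k => al (i + 1) η k + rm (al i η) k := al_succ i η
  have e2 : al i (Pit (i+1) (Pit i η)) = fun k => al i η k - 2 * rm (al i η) k +
      rm (fun k => al (i + 1) η k + rm (al i η) k) k := by
    rw [al_pred, e1, al_self]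
  have e3 : al i (Pit (i+1) η) = fun k => al i η k + rm (al (i+1) η) k := al_pred i η
  have e4 : al (i+1) (Pit i (Pit (i+1) η)) = fun k => al (i+1) η k - 2 * rm (al (i+1) η) k +
      rm (fun k => al i η k + rm (al (i+1) η) k) k := by
    rw [al_succ, e3, al_self]
  funext k x
  have c1 := (braid_core (al i η) (al (i+1) η) (al_zero h _) (al_zero h _) (al_step h i) k).1
  have c2 := (braid_core (al (i+1) η) (al i η) (al_zero h _) (al_zero h _) (al_step h (i+1)) k).1
  rw [Pit, Pit, Pit, Pit, Pit, Pit, e2, e4, e1, e3, c1, c2]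
  by_cases x0 : x = i
  · subst x0
    have h1 : x ≠ x + 1 + 1 := by omega
    simp [h1]
  · by_cases x1 : x = i + 1
    · subst x1; simp; ring
    · by_cases x2 : x = i + 1 + 1
      · subst x2
        simp [x0]
      · simp [x0, x1, x2]

def sh (η : Pth) : Pth := fun k j => η (k + 1) j - η 1 j

lemma sh_UU {η : Pth} (h : UU η) : UU (sh η) := by
  refine ⟨fun j => by simp [sh], fun k => ?_⟩
  simpa [sh] using h.2 (k + 1)

lemma shift_core (A : ℕ → ℤ) (hA0 : A 0 = 0)
    (hA : ∀ k, A k - 1 ≤ A (k + 1) ∧ A (k + 1) ≤ A k + 1) (k : ℕ) :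
    rm (fun k => A (k + 1) - A 1) k = rm A (k + 1) - rm A 1 +
      rm (fun k => (A (k + 1) - 2 * rm A (k + 1)) - (A 1 - 2 * rm A 1)) k ∧
    rm A (k + 1) = min 0 (rm (fun k => A (k + 1) - A 1) k + A 1) := by
  induction k with
  | zero => simp [rm, hA0]
  | succ k ih =>
    have a1 := rm_le A (k+1)
    have a2 := rm_le (fun k => A (k + 1) - A 1) k
    have a3 := rm_le (fun k => (A (k + 1) - 2 * rm A (k + 1)) - (A 1 - 2 * rm A 1)) k
    have a4 := rm_antitone (fun k => A (k + 1) - A 1) (Nat.zero_le k)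
    have a4' : rm (fun k => A (k + 1) - A 1) 0 = 0 := by simp [rm]
    rw [a4'] at a4
    clear a4'
    have a5 := hA (k+1)
    have a6 := hA 0
    have a7 : rm A 1 = min 0 (A 1) := by simp [rm, hA0]
    have r1 : rm A (k+1+1) = min (rm A (k+1)) (A (k+1+1)) := rfl
    have r2 : rm (fun k => A (k + 1) - A 1) (k+1) =
      min (rm (fun k => A (k + 1) - A 1) k) (A (k+1+1) - A 1) := rfl
    have r3 : rm (fun k => (A (k + 1) - 2 * rm A (k + 1)) - (A 1 - 2 * rm A 1)) (k+1) =
      min (rm (fun k => (A (k + 1) - 2 * rm A (k + 1)) - (A 1 - 2 * rm A 1)) k)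
        ((A (k + 1+1) - 2 * rm A (k + 1+1)) - (A 1 - 2 * rm A 1)) := rfl
    rw [r3, r2, r1]
    generalize rm (fun k => (A (k + 1) - 2 * rm A (k + 1)) - (A 1 - 2 * rm A 1)) k = Q at *
    generalize rm (fun k => A (k + 1) - A 1) k = N at *
    generalize rm A (k+1) = m at *
    generalize rm A 1 = m1 at *
    generalize A (k+1+1) = A2 at *
    generalize A (k+1) = A1 at *
    simp only [zero_add] at a6
    generalize A 1 = A0 at *
    rw [hA0] at a6
    clear r1 r2 r3
    obtain ⟨h1, h2⟩ := ih
    rcases le_total m A2 with c | c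
    · rw [min_eq_left c]; omega
    · rw [min_eq_right c]; omega

lemma Pit_shift {η : Pth} (h : UU η) (i : ℕ) : Pit i (sh (Pit i η)) = Pit i (sh η) := by
  have e1 : al i (sh η) = fun k => al i η (k + 1) - al i η 1 := by
    funext k; simp only [al, sh]; ring
  have e2 : al i (sh (Pit i η)) = fun k => (al i η (k + 1) - 2 * rm (al i η) (k + 1)) -
      (al i η 1 - 2 * rm (al i η) 1) := by
    have : al i (sh (Pit i η)) = fun k => al i (Pit i η) (k+1) - al i (Pit i η) 1 := by
      funext k; simp only [al, sh]; ring
    rw [this, al_self]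
  funext k x
  have c := (shift_core (al i η) (al_zero h i) (al_step h i) k).1
  rw [Pit, Pit, e1, e2, c]
  by_cases x0 : x = i
  · subst x0; simp [sh, Pit]; ring
  · by_cases x1 : x = i + 1
    · subst x1; simp [sh, Pit]; ring
    · simp [x0, x1, sh, Pit]

/-- `Cyc n = P_{n-1} ∘ ⋯ ∘ P_0`. -/
def Cyc : ℕ → Pth → Pth
  | 0, η => η
  | n + 1, η => Pit n (Cyc n η)

/-- The Pitman transform of the longest element. -/
def Phi : ℕ → Pth → Pth
  | 0, η => η
  | n + 1, η => Phi n (Cyc (n + 1) η)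

lemma Cyc_UU {η : Pth} (h : UU η) (n : ℕ) : UU (Cyc n η) := by
  induction n with
  | zero => exact h
  | succ n ih => exact Pit_UU ih n

lemma Phi_UU {η : Pth} (h : UU η) (n : ℕ) : UU (Phi n η) := by
  induction n generalizing η with
  | zero => exact h
  | succ n ih => exact ih (Cyc_UU h _)

lemma Cyc_far (η : Pth) (n i : ℕ) (h : n < i) : Cyc n (Pit i η) = Pit i (Cyc n η) := by
  induction n with
  | zero => rfl
  | succ n ih => simp only [Cyc]; rw [ih (by omega), Pit_comm _ _ _ (by omega)]

lemma Cyc_zero {η : Pth} (h : UU η) (n : ℕ) : Cyc (n + 1) (Pit 0 η) = Cyc (n + 1) η := by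
  induction n with
  | zero => exact Pit_idem h 0
  | succ n ih => rw [Cyc, ih]; rfl

lemma Cyc_succ {η : Pth} (h : UU η) (n i : ℕ) (hi : i + 1 < n) :
    Cyc n (Pit (i + 1) η) = Pit i (Cyc n η) := by
  induction n with
  | zero => omega
  | succ n ih =>
    rcases Nat.lt_or_ge (i + 1) n with h1 | h1
    · rw [Cyc, ih h1, Cyc, Pit_comm _ _ _ h1]
    · obtain rfl : n = i + 1 := by omega
      simp only [Cyc]
      rw [Cyc_far _ _ _ (by omega), Pit_braid (Cyc_UU h _)]

lemma Phi_Pit {η : Pth} (h : UU η) (n i : ℕ) (hi : i < n) : Phi n (Pit i η) = Phi n η := by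
  induction n generalizing η i with
  | zero => omega
  | succ n ih =>
    simp only [Phi]
    cases i with
    | zero => rw [Cyc_zero h]
    | succ i => rw [Cyc_succ h _ _ hi, ih (Cyc_UU h _) _ (by omega)]

lemma Phi_sh_Pit {η : Pth} (h : UU η) (n i : ℕ) (hi : i < n) :
    Phi n (sh (Pit i η)) = Phi n (sh η) := by
  rw [← Phi_Pit (sh_UU (Pit_UU h i)) n i hi, Pit_shift h, Phi_Pit (sh_UU h) n i hi]

lemma Phi_sh_Cyc {η : Pth} (h : UU η) (n i : ℕ) (hi : i ≤ n) :
    Phi n (sh (Cyc i η)) = Phi n (sh η) := by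
  induction i with
  | zero => rfl
  | succ i ih => rw [Cyc, Phi_sh_Pit (Cyc_UU h i) n i (by omega), ih (by omega)]

lemma Phi_sh_Phi {η : Pth} (h : UU η) (n i : ℕ) (hi : i ≤ n) :
    Phi n (sh (Phi i η)) = Phi n (sh η) := by
  induction i generalizing η with
  | zero => rfl
  | succ i ih => rw [Phi, ih (Cyc_UU h _) (by omega), Phi_sh_Cyc h n (i + 1) hi]

lemma Cyc_congr (n : ℕ) (η ξ : Pth) (k : ℕ) (h : ∀ s ≤ k, η s = ξ s) :
    ∀ s ≤ k, Cyc n η s = Cyc n ξ s := by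
  induction n with
  | zero => exact h
  | succ n ih => exact Pit_congr n _ _ k ih

lemma Phi_congr (n : ℕ) (η ξ : Pth) (k : ℕ) (h : ∀ s ≤ k, η s = ξ s) :
    ∀ s ≤ k, Phi n η s = Phi n ξ s := by
  induction n generalizing η ξ with
  | zero => exact h
  | succ n ih => exact ih _ _ (Cyc_congr (n + 1) _ _ k h)

lemma Cyc_dom {η : Pth} (h0 : ∀ j, η 0 j = 0) (n : ℕ) (h : ∀ i < n, ∀ k, 0 ≤ al i η k) :
    Cyc n η = η := by
  induction n with
  | zero => rfl
  | succ n ih => rw [Cyc, ih fun i hi => h i (by omega), Pit_dom h0 n (h n (by omega))]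

lemma Phi_dom {η : Pth} (h0 : ∀ j, η 0 j = 0) (n : ℕ) (h : ∀ i < n, ∀ k, 0 ≤ al i η k) :
    Phi n η = η := by
  induction n with
  | zero => rfl
  | succ n ih => rw [Phi, Cyc_dom h0 _ h, ih fun i hi => h i (by omega)]

/-! Lowest weight paths. -/

def NN (η : Pth) : ℕ → ℕ → ℤ
  | 0 => fun _ => 0
  | j + 1 => rm (fun s => η s j - η s (j + 1) + NN η j s)

lemma Cyc_formula (η : Pth) (n s x : ℕ) : Cyc n η s x =
    if x < n then η s x + NN η x s - NN η (x + 1) s else if x = n then η s x + NN η x s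
    else η s x := by
  induction n generalizing s x with
  | zero =>
    simp only [Cyc]
    split_ifs with a b
    · omega
    · subst b; simp [NN]
    · rfl
  | succ n ih =>
    have e : al n (Cyc n η) = fun s => η s n - η s (n + 1) + NN η n s := by
      funext s
      simp only [al, ih]
      simp
      ring
    have e' : rm (al n (Cyc n η)) s = NN η (n + 1) s := by rw [e]; rfl
    simp only [Cyc]
    rw [Pit, e', ih]
    by_cases h1 : x = n
    · subst h1; simp
    · by_cases h2 : x = n + 1
      · subst h2; simp
      · have : x < n + 1 ↔ x < n := by omega
        simp [h1, h2, this]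

lemma NN_anti (η : Pth) (j : ℕ) : Antitone (NN η j) := by
  cases j with
  | zero => intro a b _; simp [NN]
  | succ j => exact rm_antitone _

lemma NN_diff (η : Pth) (L j : ℕ) (h : ∀ s ≤ L, al j η L ≤ al j η s) (s : ℕ) (hs : s ≤ L) :
    al j η L + NN η j s ≤ NN η (j + 1) s := by
  apply rm_ge
  intro u hu
  have h1 := NN_anti η j hu
  have h2 := h u (by omega)
  have h3 : al j η u = η u j - η u (j + 1) := rfl
  omega

lemma NN_le (η : Pth) (j s : ℕ) : NN η (j + 1) s ≤ al j η s + NN η j s := by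
  have := rm_le (fun s => η s j - η s (j + 1) + NN η j s) s
  simpa [NN, al] using this

lemma NN_end (η : Pth) (L n : ℕ) (h : ∀ i < n, ∀ s ≤ L, al i η L ≤ al i η s) (j : ℕ) (hj : j ≤ n) :
    NN η j L = η L 0 - η L j := by
  induction j with
  | zero => simp [NN]
  | succ j ih =>
    have h1 := NN_diff η L j (h j (by omega)) L le_rfl
    have h2 := NN_le η j L
    have h3 := ih (by omega)
    have h4 : al j η L = η L j - η L (j + 1) := rfl
    omega

lemma Phi_high (η : Pth) (n s x : ℕ) (h : n < x) : Phi n η s x = η s x := by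
  induction n generalizing η with
  | zero => rfl
  | succ n ih =>
    rw [Phi, ih _ (by omega), Cyc_formula, if_neg (by omega), if_neg (by omega)]

lemma Phi_low (η : Pth) (L n : ℕ) (h : ∀ i < n, ∀ s ≤ L, al i η L ≤ al i η s) (x : ℕ)
    (hx : x ≤ n) : Phi n η L x = η L (n - x) := by
  induction n generalizing η x with
  | zero => obtain rfl : x = 0 := by omega
            rfl
  | succ n ih =>
    have hN := NN_end η L (n+1) h
    rw [Phi]
    rcases Nat.lt_or_ge n x with h1 | h1
    · obtain rfl : x = n + 1 := by omega
      rw [Phi_high _ _ _ _ h1, Cyc_formula, if_neg (by omega), if_pos rfl, hN _ le_rfl]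
      simp
    · rw [ih _ _ x h1]
      · rw [Cyc_formula, if_pos (by omega), hN _ (by omega), hN _ (by omega)]
        have : n + 1 - x = n - x + 1 := by omega
        rw [this]; ring
      · intro i hi s hs
        simp only [al]
        simp only [Cyc_formula]
        rw [if_pos (by omega), if_pos (by omega), if_pos (by omega), if_pos (by omega)]
        rw [hN _ (by omega), hN _ (by omega), hN _ (by omega)]
        have h1 := NN_diff η L (i+1) (h (i+1) (by omega)) s hs
        have h2 := NN_le η i s
        have h3 : al (i+1) η L = η L (i+1) - η L (i + 1+1) := rfl
        have h4 : al i η s = η s i - η s (i + 1) := rfl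
        omega

/-! ### Tableaux with unit steps and promotion -/

structure Good (r t : ℕ) (S : ℕ → GP r) : Prop where
  zero : S 0 = 0
  anti : ∀ k ≤ t, Antitone (S k)
  step : ∀ k < t, ∃ d, S (k + 1) = S k + eV d ∨ S k = S (k + 1) + eV d

lemma sortDesc_eq {r : ℕ} (α β : GP r) (σ : Equiv.Perm (Fin r)) (hβ : Antitone β)
    (h : β = α ∘ σ) : sortDesc α = β := by
  have hm : Monotone (α ∘ (Fin.revPerm.trans σ : Equiv.Perm (Fin r))) := by
    intro x y hxy
    have : β (Fin.rev x) ≤ β (Fin.rev y) := hβ (Fin.rev_le_rev.mpr hxy)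
    simpa [h] using this
  have h2 := Tuple.comp_sort_eq_comp_iff_monotone.mpr hm
  funext i
  have h3 := congrFun h2 i.rev
  simp only [sortDesc]
  rw [← h3, h]
  simp

lemma sort_sub {r : ℕ} (D : GP r) (hD : Antitone D) (b : Fin r) :
    ∃ b', b ≤ b' ∧ D b = D b' ∧ (∀ j, b' < j → D j < D b') ∧ sortDesc (D - eV b) = D - eV b' := by
  obtain ⟨b', hb', hmax⟩ := Finset.exists_max_image
    (Finset.univ.filter fun x : Fin r => D x = D b) id ⟨b, by simp⟩
  simp only [Finset.mem_filter, Finset.mem_univ, true_and, id] at hb' hmax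
  have hm : ∀ j, b' < j → D j < D b' := by
    intro j hj
    refine lt_of_le_of_ne (hD hj.le) fun h => ?_
    exact absurd (hmax j (h.trans hb')) (not_le.mpr hj)
  refine ⟨b', hmax b rfl, hb'.symm, hm, ?_⟩
  apply sortDesc_eq _ _ (Equiv.swap b b')
  · intro x y hxy
    simp only [Pi.sub_apply, eV]
    have h1 := hD hxy
    split_ifs with h2 h3 h3
    · omega
    · omega
    · subst h3
      have := hm y (lt_of_le_of_ne hxy (fun h => h2 h.symm))
      omega
    · omega
  · funext x
    simp only [Pi.sub_apply, eV, Function.comp]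
    by_cases h1 : x = b
    · subst h1
      rw [Equiv.swap_apply_left, hb']
      by_cases h2 : x = b'
      · simp [h2]
      · simp [h2, Ne.symm h2]
    · by_cases h2 : x = b'
      · subst h2
        rw [Equiv.swap_apply_right, hb']
        simp
      · rw [Equiv.swap_apply_of_ne_of_ne h1 h2]
        simp [h1, h2]

lemma sort_add {r : ℕ} (D : GP r) (hD : Antitone D) (b : Fin r) :
    ∃ b', b' ≤ b ∧ D b = D b' ∧ (∀ j, j < b' → D b' < D j) ∧ sortDesc (D + eV b) = D + eV b' := by
  obtain ⟨b', hb', hmax⟩ := Finset.exists_min_image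
    (Finset.univ.filter fun x : Fin r => D x = D b) id ⟨b, by simp⟩
  simp only [Finset.mem_filter, Finset.mem_univ, true_and, id] at hb' hmax
  have hm : ∀ j, j < b' → D b' < D j := by
    intro j hj
    refine lt_of_le_of_ne (hD hj.le) fun h => ?_
    exact absurd (hmax j (h.symm.trans hb')) (not_le.mpr hj)
  refine ⟨b', hmax b rfl, hb'.symm, hm, ?_⟩
  apply sortDesc_eq _ _ (Equiv.swap b b')
  · intro x y hxy
    simp only [Pi.add_apply, eV]
    have h1 := hD hxy
    split_ifs with h2 h3 h3
    · omega
    · subst h2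
      have := hm x (lt_of_le_of_ne hxy h3)
      omega
    · omega
    · omega
  · funext x
    simp only [Pi.add_apply, eV, Function.comp]
    by_cases h1 : x = b
    · subst h1
      rw [Equiv.swap_apply_left, hb']
      by_cases h2 : x = b'
      · simp [h2]
      · simp [h2, Ne.symm h2]
    · by_cases h2 : x = b'
      · subst h2
        rw [Equiv.swap_apply_right, hb']
        simp
      · rw [Equiv.swap_apply_of_ne_of_ne h1 h2]
        simp [h1, h2]

lemma BKseg_high {r : ℕ} (S : ℕ → GP r) (m k : ℕ) (h : k = 0 ∨ m < k) : BKseg 1 m S k = S k := by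
  induction m with
  | zero => rfl
  | succ m ih =>
    simp only [BKseg, Function.comp, BK]
    rw [if_neg (by omega), ih (by omega)]

lemma BKseg_rec {r : ℕ} (S : ℕ → GP r) (m k : ℕ) (h : k < m) :
    BKseg 1 m S (k + 1) = sortDesc (S (k + 2) + BKseg 1 m S k - S (k + 1)) := by
  induction m with
  | zero => omega
  | succ m ih =>
    simp only [BKseg, Function.comp, BK]
    by_cases h1 : k = m
    · subst h1
      rw [if_pos (by omega), if_neg (by omega)]
      have e1 : 1 + k + 1 = k + 2 := by omega
      have e2 : 1 + k - 1 = k := by omega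
      have e3 : 1 + k = k + 1 := by omega
      rw [e1, e2, e3, BKseg_high _ _ (k+2) (by omega), BKseg_high _ _ (k+1) (by omega)]
    · rw [if_neg (by omega), if_neg (by omega), ih (by omega)]

lemma promo_zero {r : ℕ} (t : ℕ) (S : ℕ → GP r) : promo t S 0 = S 0 := BKseg_high _ _ _ (Or.inl rfl)

lemma promo_high {r : ℕ} (t : ℕ) (ht : 1 ≤ t) (S : ℕ → GP r) (k : ℕ) (h : t ≤ k) :
    promo t S k = S k := BKseg_high _ _ _ (by omega)

lemma promo_rec {r : ℕ} (t : ℕ) (S : ℕ → GP r) (k : ℕ) (h : k + 1 < t) :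
    promo t S (k + 1) = sortDesc (S (k + 2) + promo t S k - S (k + 1)) :=
  BKseg_rec _ _ _ (by omega)

lemma row_plus {r t : ℕ} {S : ℕ → GP r} (hS : Good r t S) (ht : 1 ≤ t) (z : Fin r)
    (h1 : S 1 = eV z) : ∃ b : ℕ → Fin r, b 0 = z ∧
      (∀ k < t, S (k + 1) = promo t S k + eV (b k)) ∧
      (∀ k < t, ∀ j, b k < j → S (k + 1) j < S (k + 1) (b k)) ∧
      (∀ k, k + 1 < t → b k ≤ b (k + 1) ∧ S (k + 2) (b k) = S (k + 2) (b (k + 1))) := by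
  have key : ∀ (k : ℕ) (b : Fin r), ∃ b', k + 1 < t → b ≤ b' ∧ S (k + 2) b = S (k + 2) b' ∧
      (∀ j, b' < j → S (k + 2) j < S (k + 2) b') ∧
      sortDesc (S (k + 2) - eV b) = S (k + 2) - eV b' := by
    intro k b
    by_cases hk : k + 1 < t
    · obtain ⟨b', h⟩ := sort_sub (S (k + 2)) (hS.anti _ (by omega)) b
      exact ⟨b', fun _ => h⟩
    · exact ⟨b, fun h => absurd h hk⟩
  choose f hf using key
  let b : ℕ → Fin r := fun k => Nat.rec z (fun k x => f k x) k
  have hb : ∀ k, b (k + 1) = f k (b k) := fun k => rfl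
  have hb0 : b 0 = z := rfl
  refine ⟨b, rfl, ?_, ?_, ?_⟩
  · intro k
    induction k with
    | zero => intro _; rw [promo_zero, hS.zero, zero_add, zero_add, h1, hb0]
    | succ k ih =>
      intro hk
      have e := ih (by omega)
      have h2 := (hf k (b k) hk).2.2.2
      have e2 : S (k + 2) + promo t S k - S (k + 1) = S (k + 2) - eV (b k) := by rw [e]; abel
      rw [promo_rec t S k hk, e2, h2, hb]
      abel
  · intro k hk j hj
    cases k with
    | zero =>
      have hz : j ≠ z := fun h => by subst h; exact lt_irrefl _ hj
      simp only [zero_add, h1, eV]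
      rw [if_neg hz, if_pos hb0]; norm_num
    | succ k =>
      exact (hf k (b k) hk).2.2.1 j hj
  · intro k hk
    exact ⟨(hf k (b k) hk).1, (hf k (b k) hk).2.1⟩

lemma row_minus {r t : ℕ} {S : ℕ → GP r} (hS : Good r t S) (ht : 1 ≤ t) (z : Fin r)
    (h1 : S 1 = - eV z) : ∃ b : ℕ → Fin r, b 0 = z ∧
      (∀ k < t, promo t S k = S (k + 1) + eV (b k)) ∧
      (∀ k < t, ∀ j, j < b k → S (k + 1) (b k) < S (k + 1) j) ∧
      (∀ k, k + 1 < t → b (k + 1) ≤ b k ∧ S (k + 2) (b k) = S (k + 2) (b (k + 1))) := by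
  have key : ∀ (k : ℕ) (b : Fin r), ∃ b', k + 1 < t → b' ≤ b ∧ S (k + 2) b = S (k + 2) b' ∧
      (∀ j, j < b' → S (k + 2) b' < S (k + 2) j) ∧
      sortDesc (S (k + 2) + eV b) = S (k + 2) + eV b' := by
    intro k b
    by_cases hk : k + 1 < t
    · obtain ⟨b', h⟩ := sort_add (S (k + 2)) (hS.anti _ (by omega)) b
      exact ⟨b', fun _ => h⟩
    · exact ⟨b, fun h => absurd h hk⟩
  choose f hf using key
  let b : ℕ → Fin r := fun k => Nat.rec z (fun k x => f k x) k
  have hb : ∀ k, b (k + 1) = f k (b k) := fun k => rfl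
  have hb0 : b 0 = z := rfl
  refine ⟨b, rfl, ?_, ?_, ?_⟩
  · intro k
    induction k with
    | zero => intro _; rw [promo_zero, hS.zero, zero_add, h1]; exact (neg_add_cancel _).symm
    | succ k ih =>
      intro hk
      have e := ih (by omega)
      have h2 := (hf k (b k) hk).2.2.2
      have e2 : S (k + 2) + promo t S k - S (k + 1) = S (k + 2) + eV (b k) := by rw [e]; abel
      rw [promo_rec t S k hk, e2, h2, hb]
  · intro k hk j hj
    cases k with
    | zero =>
      have hz : j ≠ z := fun h => by subst h; exact lt_irrefl _ hj
      simp only [zero_add, h1, eV, Pi.neg_apply]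
      rw [if_neg hz, if_pos hb0]; norm_num
    | succ k =>
      exact (hf k (b k) hk).2.2.1 j hj
  · intro k hk
    exact ⟨(hf k (b k) hk).1, (hf k (b k) hk).2.1⟩

/-- The two possibilities for a promotion row. -/
def RowP {r : ℕ} (t : ℕ) (S R : ℕ → GP r) (b : ℕ → Fin r) : Prop :=
  ((b 0 : ℕ) = 0) ∧ (∀ k < t, S (k + 1) = R k + eV (b k)) ∧
      (∀ k < t, ∀ j, b k < j → S (k + 1) j < S (k + 1) (b k)) ∧
      (∀ k, k + 1 < t → b k ≤ b (k + 1) ∧ S (k + 2) (b k) = S (k + 2) (b (k + 1)))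

def RowM {r : ℕ} (t : ℕ) (S R : ℕ → GP r) (b : ℕ → Fin r) : Prop :=
  ((b 0 : ℕ) = r - 1) ∧ (∀ k < t, R k = S (k + 1) + eV (b k)) ∧
      (∀ k < t, ∀ j, j < b k → S (k + 1) (b k) < S (k + 1) j) ∧
      (∀ k, k + 1 < t → b (k + 1) ≤ b k ∧ S (k + 2) (b k) = S (k + 2) (b (k + 1)))

lemma row_exists {r t : ℕ} {S : ℕ → GP r} (hS : Good r t S) (ht : 1 ≤ t) :
    ∃ b, RowP t S (promo t S) b ∨ RowM t S (promo t S) b := by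
  obtain ⟨d, hd⟩ := hS.step 0 ht
  have ha := hS.anti 1 ht
  rw [hS.zero] at hd
  rcases hd with hd | hd
  · have h1 : S 1 = eV d := by simpa using hd
    have hz : (d : ℕ) = 0 := by
      have hr := d.2
      have h2 := ha (show (⟨0, by omega⟩ : Fin r) ≤ d from Nat.zero_le _)
      simp only [h1, eV, if_pos] at h2
      split_ifs at h2 with h3
      · rw [← h3]
      · omega
    obtain ⟨b, hb, h⟩ := row_plus hS ht d h1
    exact ⟨b, Or.inl ⟨by rw [hb]; exact hz, h⟩⟩
  · have h1 : S 1 = - eV d := by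
      rw [zero_add] at hd
      exact eq_neg_of_add_eq_zero_left hd.symm
    have hz : (d : ℕ) = r - 1 := by
      have hr := d.2
      have h2 := ha (show d ≤ (⟨r - 1, by omega⟩ : Fin r) from by
        rw [Fin.le_def]; simp only; omega)
      simp only [h1, eV, Pi.neg_apply, if_pos] at h2
      split_ifs at h2 with h3
      · rw [← h3]
      · omega
    obtain ⟨b, hb, h⟩ := row_minus hS ht d h1
    exact ⟨b, Or.inr ⟨by rw [hb]; exact hz, h⟩⟩

lemma eV_self {r : ℕ} (a : Fin r) : eV a a = 1 := by simp [eV]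
lemma eV_ne {r : ℕ} {a b : Fin r} (h : b ≠ a) : eV a b = 0 := by simp [eV, h]
lemma eV_cases {r : ℕ} (a b : Fin r) : (b = a ∧ eV a b = 1) ∨ (b ≠ a ∧ eV a b = 0) := by
  by_cases h : b = a
  · left; simp [eV, h]
  · right; simp [eV, h]

lemma promo_good {r t : ℕ} {S : ℕ → GP r} (hS : Good r t S) (ht : 1 ≤ t) :
    Good r t (promo t S) := by
  obtain ⟨b, hb⟩ := row_exists hS ht
  refine ⟨by rw [promo_zero, hS.zero], ?_, ?_⟩
  · intro k hk
    rcases hk.eq_or_lt with rfl | hk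
    · rw [promo_high _ ht _ _ le_rfl]; exact hS.anti _ le_rfl
    · rcases hb with ⟨-, h1, h2, -⟩ | ⟨-, h1, h2, -⟩
      · intro x y hxy
        have e := h1 k hk
        have ex := congrFun e x
        have ey := congrFun e y
        simp only [Pi.add_apply] at ex ey
        have h3 := hS.anti (k + 1) (by omega) hxy
        rcases eV_cases (b k) x with ⟨hx, vx⟩ | ⟨hx, vx⟩ <;>
        rcases eV_cases (b k) y with ⟨hy, vy⟩ | ⟨hy, vy⟩ <;> rw [vx] at ex <;> rw [vy] at ey
        · omega
        · have := h2 k hk y (lt_of_le_of_ne (hx ▸ hxy) (Ne.symm hy))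
          rw [← hx] at this
          omega
        · omega
        · omega
      · intro x y hxy
        have e := h1 k hk
        have ex := congrFun e x
        have ey := congrFun e y
        simp only [Pi.add_apply] at ex ey
        have h3 := hS.anti (k + 1) (by omega) hxy
        rcases eV_cases (b k) x with ⟨hx, vx⟩ | ⟨hx, vx⟩ <;>
        rcases eV_cases (b k) y with ⟨hy, vy⟩ | ⟨hy, vy⟩ <;> rw [vx] at ex <;> rw [vy] at ey
        · omega
        · omega
        · have := h2 k hk x (lt_of_le_of_ne (hy ▸ hxy) hx)
          rw [← hy] at this
          omega
        · omega
  · intro k hk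
    rcases Nat.lt_or_ge (k + 1) t with hk1 | hk1
    · rcases hb with ⟨-, h1, h2, h3⟩ | ⟨-, h1, h2, h3⟩
      · obtain ⟨h4, h5⟩ := h3 k hk1
        change S (k + 1 + 1) _ = S (k + 1 + 1) _ at h5
        have e0 := h1 k hk
        have e1 := h1 (k + 1) hk1
        obtain ⟨d, hd⟩ := hS.step (k + 1) hk1
        have e0' : promo t S k = S (k + 1) - eV (b k) := by rw [e0]; abel
        have e1' : promo t S (k + 1) = S (k + 1 + 1) - eV (b (k + 1)) := by rw [e1]; abel
        rcases h4.eq_or_lt with h4 | h4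
        · refine ⟨d, ?_⟩
          rw [e0', e1', ← h4]
          rcases hd with hd | hd
          · left; rw [hd]; abel
          · right; rw [hd]; abel
        · have h6 := h2 k hk _ h4
          rcases hd with hd | hd
          · have x1 := congrFun hd (b k)
            have x2 := congrFun hd (b (k + 1))
            simp only [Pi.add_apply] at x1 x2
            have : b (k + 1) = d := by
              rcases eV_cases d (b k) with ⟨hx, vx⟩ | ⟨hx, vx⟩ <;>
              rcases eV_cases d (b (k + 1)) with ⟨hy, vy⟩ | ⟨hy, vy⟩ <;>
                first | exact hy | (exfalso; omega)
            refine ⟨b k, Or.inl ?_⟩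
            rw [e0', e1', hd, this]; abel
          · have x1 := congrFun hd (b k)
            have x2 := congrFun hd (b (k + 1))
            simp only [Pi.add_apply] at x1 x2
            have : b k = d := by
              rcases eV_cases d (b k) with ⟨hx, vx⟩ | ⟨hx, vx⟩ <;>
              rcases eV_cases d (b (k + 1)) with ⟨hy, vy⟩ | ⟨hy, vy⟩ <;>
                first | exact hx | (exfalso; omega)
            refine ⟨b (k + 1), Or.inr ?_⟩
            rw [e0', e1', hd, this]; abel
      · obtain ⟨h4, h5⟩ := h3 k hk1
        change S (k + 1 + 1) _ = S (k + 1 + 1) _ at h5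
        have e0' := h1 k hk
        have e1' := h1 (k + 1) hk1
        obtain ⟨d, hd⟩ := hS.step (k + 1) hk1
        rcases h4.eq_or_lt with h4 | h4
        · refine ⟨d, ?_⟩
          rw [e0', e1', ← h4]
          rcases hd with hd | hd
          · left; rw [hd]; abel
          · right; rw [hd]; abel
        · have h6 := h2 k hk _ h4
          rcases hd with hd | hd
          · have x1 := congrFun hd (b k)
            have x2 := congrFun hd (b (k + 1))
            simp only [Pi.add_apply] at x1 x2
            have : b k = d := by
              rcases eV_cases d (b k) with ⟨hx, vx⟩ | ⟨hx, vx⟩ <;>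
              rcases eV_cases d (b (k + 1)) with ⟨hy, vy⟩ | ⟨hy, vy⟩ <;>
                first | exact hx | (exfalso; omega)
            refine ⟨b (k + 1), Or.inl ?_⟩
            rw [e0', e1', hd, this]
          · have x1 := congrFun hd (b k)
            have x2 := congrFun hd (b (k + 1))
            simp only [Pi.add_apply] at x1 x2
            have : b (k + 1) = d := by
              rcases eV_cases d (b k) with ⟨hx, vx⟩ | ⟨hx, vx⟩ <;>
              rcases eV_cases d (b (k + 1)) with ⟨hy, vy⟩ | ⟨hy, vy⟩ <;>
                first | exact hy | (exfalso; omega)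
            refine ⟨b k, Or.inr ?_⟩
            rw [e0', e1', hd, this]
    · obtain rfl : t = k + 1 := by omega
      refine ⟨b k, ?_⟩
      rw [promo_high _ ht S (k + 1) le_rfl]
      rcases hb with ⟨-, h1, -⟩ | ⟨-, h1, -⟩
      · left; exact h1 k hk
      · right; exact h1 k hk

/-! ### Promotion rows as Pitman transforms -/

lemma cyc_core (η s : Pth) (β : ℕ → ℕ) (t n : ℕ) (hU : UU η) (h0 : β 0 = 0)
    (hmono : ∀ k, k + 1 < t → β k ≤ β (k + 1) ∧
      ∀ x, β k ≤ x → x ≤ β (k + 1) → s (k + 1) x = s (k + 1) (β k))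
    (hmax : ∀ k < t, β k < n → s k (β k + 1) < s k (β k))
    (hdom : ∀ k < t, ∀ i < n, s k (i + 1) ≤ s k i)
    (hη : ∀ k < t, ∀ x, η k x = s k x - if x = 0 then 1 else 0) (j : ℕ) (hj : j ≤ n) :
    ∀ k < t, ∀ x, Cyc j η k x = s k x - if x = min (β k) j then 1 else 0 := by
  induction j with
  | zero => intro k hk x; simpa [Cyc] using hη k hk x
  | succ j ih =>
    have ih := ih (by omega)
    have hal : ∀ k < t, al j (Cyc j η) k = s k j - s k (j + 1) - if j ≤ β k then 1 else 0 := by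
      intro k hk
      simp only [al, ih k hk]
      have e1 : (j = min (β k) j) ↔ j ≤ β k := by omega
      have e2 : ¬ (j + 1 = min (β k) j) := by omega
      simp only [e1, e2, if_false]
      ring
    have hrm : ∀ k < t, rm (al j (Cyc j η)) k = if j + 1 ≤ β k then -1 else 0 := by
      intro k
      induction k with
      | zero =>
        intro hk
        rw [rm, al_zero (Cyc_UU hU j), h0, if_neg (by omega)]
      | succ k ih2 =>
        intro hk
        have i2 := ih2 (by omega)
        rw [rm, i2, hal _ hk]
        obtain ⟨m1, m2⟩ := hmono k hk
        have d := hdom (k + 1) hk j (by omega)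
        have m := hmax (k + 1) hk
        by_cases c1 : j + 1 ≤ β k
        · rw [if_pos c1, if_pos (show j ≤ β (k+1) by omega), if_pos (show j + 1 ≤ β (k+1) by omega)]
          omega
        · rw [if_neg c1]
          by_cases c2 : j + 1 ≤ β (k + 1)
          · have e1 := m2 j (by omega) (by omega)
            have e2 := m2 (j + 1) (by omega) (by omega)
            rw [if_pos c2, if_pos (by omega)]
            omega
          · rw [if_neg c2]
            by_cases c3 : j = β (k + 1)
            · have m' := m (by omega)
              rw [← c3] at m'
              rw [if_pos (by omega)]
              omega
            · rw [if_neg (by omega)]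
              omega
    intro k hk x
    rw [Cyc, Pit, hrm k hk, ih k hk]
    by_cases c1 : j + 1 ≤ β k
    · rw [if_pos c1, min_eq_right c1, min_eq_right (by omega : j ≤ β k)]
      by_cases c2 : x = j
      · subst c2; simp
      · by_cases c3 : x = j + 1
        · subst c3; simp; ring
        · simp [c2, c3]
    · rw [if_neg c1, min_eq_left (by omega : β k ≤ j), min_eq_left (by omega : β k ≤ j + 1)]
      simp

def Dsc (n : ℕ) : ℕ → Pth → Pth
  | 0, η => η
  | j + 1, η => Pit (n - 1 - j) (Dsc n j η)

lemma Dsc_UU {η : Pth} (h : UU η) (n j : ℕ) : UU (Dsc n j η) := by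
  induction j with
  | zero => exact h
  | succ j ih => exact Pit_UU ih _

lemma Phi_Cyc {η : Pth} (h : UU η) (n j : ℕ) (hj : j ≤ n) : Phi n (Cyc j η) = Phi n η := by
  induction j with
  | zero => rfl
  | succ j ih => rw [Cyc, Phi_Pit (Cyc_UU h j) n j (by omega), ih (by omega)]

lemma Phi_Dsc {η : Pth} (h : UU η) (n j : ℕ) (hj : j ≤ n) : Phi n (Dsc n j η) = Phi n η := by
  induction j with
  | zero => rfl
  | succ j ih => rw [Dsc, Phi_Pit (Dsc_UU h n j) n _ (by omega), ih (by omega)]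

lemma dsc_core (η s : Pth) (β : ℕ → ℕ) (t n : ℕ) (hU : UU η) (h0 : β 0 = n)
    (hle : ∀ k < t, β k ≤ n)
    (hmono : ∀ k, k + 1 < t → β (k + 1) ≤ β k ∧
      ∀ x, β (k + 1) ≤ x → x ≤ β k → s (k + 1) x = s (k + 1) (β k))
    (hmax : ∀ k < t, ∀ y, y + 1 = β k → s k (y + 1) < s k y)
    (hdom : ∀ k < t, ∀ i < n, s k (i + 1) ≤ s k i)
    (hη : ∀ k < t, ∀ x, η k x = s k x + if x = n then 1 else 0) (j : ℕ) (hj : j ≤ n) :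
    ∀ k < t, ∀ x, Dsc n j η k x = s k x + if x = max (β k) (n - j) then 1 else 0 := by
  induction j with
  | zero =>
    intro k hk x
    have := hle k hk
    rw [Nat.sub_zero, max_eq_right this]
    exact hη k hk x
  | succ j ih =>
    have ih := ih (by omega)
    obtain ⟨p, hp⟩ : ∃ p, p = n - 1 - j := ⟨_, rfl⟩
    have hp1 : n - j = p + 1 := by omega
    have hp2 : n - (j + 1) = p := by omega
    rw [hp1] at ih
    rw [hp2]
    have hal : ∀ k < t, al p (Dsc n j η) k =
        s k p - s k (p + 1) - if β k ≤ p + 1 then 1 else 0 := by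
      intro k hk
      simp only [al, ih k hk]
      have e1 : (p + 1 = max (β k) (p + 1)) ↔ β k ≤ p + 1 := by omega
      have e2 : ¬ (p = max (β k) (p + 1)) := by omega
      simp only [e1, e2, if_false]
      ring
    have hrm : ∀ k < t, rm (al p (Dsc n j η)) k = if β k ≤ p then -1 else 0 := by
      intro k
      induction k with
      | zero =>
        intro hk
        rw [rm, al_zero (Dsc_UU hU n j), h0, if_neg (by omega)]
      | succ k ih2 =>
        intro hk
        have i2 := ih2 (by omega)
        rw [rm, i2, hal _ hk]
        obtain ⟨m1, m2⟩ := hmono k hk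
        have d := hdom (k + 1) hk p (by omega)
        have m := hmax (k + 1) hk
        by_cases c1 : β k ≤ p
        · rw [if_pos c1, if_pos (show β (k+1) ≤ p + 1 by omega), if_pos (show β (k+1) ≤ p by omega)]
          omega
        · rw [if_neg c1]
          by_cases c2 : β (k + 1) ≤ p
          · have e1 := m2 p (by omega) (by omega)
            have e2 := m2 (p + 1) (by omega) (by omega)
            rw [if_pos c2, if_pos (by omega)]
            omega
          · rw [if_neg c2]
            by_cases c3 : p + 1 = β (k + 1)
            · have m' := m p c3
              rw [if_pos (by omega)]
              omega
            · rw [if_neg (by omega)]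
              omega
    intro k hk x
    rw [Dsc, ← hp, Pit, hrm k hk, ih k hk]
    by_cases c1 : β k ≤ p
    · rw [if_pos c1, max_eq_right c1, max_eq_right (by omega : β k ≤ p + 1)]
      by_cases c2 : x = p
      · subst c2; simp
      · by_cases c3 : x = p + 1
        · subst c3; simp
        · simp [c2, c3]
    · rw [if_neg c1, max_eq_left (by omega : p ≤ β k), max_eq_left (by omega : p + 1 ≤ β k)]
      simp

/-- Extension of a finite path to an infinite one, with rows indexed by `ℕ`. -/
def ext {r : ℕ} (t : ℕ) (S : ℕ → GP r) : Pth := fun k j =>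
  if h : j < r then S (min k t) ⟨j, h⟩ else 0

lemma ext_lt {r : ℕ} (t : ℕ) (S : ℕ → GP r) (k j : ℕ) (hk : k ≤ t) (h : j < r) :
    ext t S k j = S k ⟨j, h⟩ := by simp [ext, h, hk]

lemma ext_UU {r t : ℕ} {S : ℕ → GP r} (hS : Good r t S) : UU (ext t S) := by
  refine ⟨fun j => ?_, fun k => ?_⟩
  · simp [ext, hS.zero]
  · rcases Nat.lt_or_ge k t with hk | hk
    · obtain ⟨d, hd | hd⟩ := hS.step k hk
      · left
        intro j
        by_cases hj : j < r
        · rw [ext_lt _ _ _ _ hk hj, ext_lt _ _ _ _ hk.le hj, hd]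
          simp only [Pi.add_apply, eV]
          split_ifs <;> omega
        · simp [ext, hj]
      · right
        intro j
        by_cases hj : j < r
        · rw [ext_lt _ _ (k + 1) _ (by omega) hj, ext_lt _ _ _ _ hk.le hj]
          have e := congrFun hd ⟨j, hj⟩
          simp only [Pi.add_apply, eV] at e
          split_ifs at e <;> omega
        · simp [ext, hj]
    · left
      intro j
      left
      have e1 : min (k + 1) t = t := by omega
      have e2 : min k t = t := by omega
      simp only [ext, e1, e2]
      simp

lemma ext_dom {r t : ℕ} {S : ℕ → GP r} (hS : Good r t S) (i : ℕ) (hi : i < r - 1) (k : ℕ) :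
    0 ≤ al i (ext t S) k := by
  have h1 : i < r := by omega
  have h2 : i + 1 < r := by omega
  simp only [al, ext, h1, h2, dif_pos, sub_nonneg]
  apply hS.anti _ (by omega)
  rw [Fin.le_def]; simp

lemma row_phi {r t : ℕ} {S : ℕ → GP r} (hS : Good r t S) (ht : 1 ≤ t) (k : ℕ) (hk : k < t) :
    Phi (r - 1) (sh (ext t S)) k = ext t (promo t S) k := by
  have hU := sh_UU (ext_UU hS)
  have hR := promo_good hS ht
  suffices h : ∃ Z, Phi (r - 1) Z = Phi (r - 1) (sh (ext t S)) ∧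
      ∀ k < t, Z k = ext t (promo t S) k by
    obtain ⟨Z, h1, h2⟩ := h
    rw [← h1, Phi_congr (r - 1) Z (ext t (promo t S)) k (fun s hs => h2 s (by omega)) k le_rfl]
    rw [Phi_dom (ext_UU hR).1 _ (ext_dom hR)]
  obtain ⟨b, hb | hb⟩ := row_exists hS ht
  · obtain ⟨h0, h1, h2, h3⟩ := hb
    refine ⟨Cyc (r - 1) (sh (ext t S)), Phi_Cyc hU _ _ le_rfl, ?_⟩
    have core := cyc_core (sh (ext t S)) (fun k x => ext t S (k + 1) x) (fun k => (b k : ℕ)) t (r - 1)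
      hU h0 ?_ ?_ ?_ ?_ (r - 1) le_rfl
    · intro k hk
      funext x
      have hbk := (b k).2
      rw [core k hk x, min_eq_left (by omega)]
      by_cases hx : x < r
      · rw [ext_lt _ _ _ _ (by omega) hx, ext_lt _ _ _ _ (by omega) hx, h1 k hk]
        simp only [Pi.add_apply, eV, Fin.ext_iff]
        ring
      · simp only [ext, hx, dif_neg, not_false_eq_true]
        rw [if_neg (by omega)]; rfl
    · intro k hk
      obtain ⟨h4, h5⟩ := h3 k hk
      refine ⟨h4, fun x hx1 hx2 => ?_⟩
      have hxr : x < r := by have := (b (k + 1)).2; omega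
      try simp only
      rw [ext_lt _ _ _ _ (by omega) hxr, ext_lt _ _ _ _ (by omega) (b k).2]
      have a1 := hS.anti (k + 2) (by omega) (show b k ≤ ⟨x, hxr⟩ from hx1)
      have a2 := hS.anti (k + 2) (by omega) (show ⟨x, hxr⟩ ≤ b (k + 1) from hx2)
      simp only [Fin.eta]
      change S (k + 2) _ = S (k + 2) _
      omega
    · intro k hk hlt
      try simp only
      have hxr : (b k : ℕ) + 1 < r := by (try simp only at hlt); omega
      rw [ext_lt _ _ _ _ (by omega) hxr, ext_lt _ _ _ _ (by omega) (b k).2]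
      exact h2 k hk ⟨(b k : ℕ) + 1, hxr⟩ (by rw [Fin.lt_def]; simp)
    · intro k hk i hi
      have := ext_dom hS i hi (k + 1)
      simp only [al] at this
      try simp only
      omega
    · intro k hk x
      simp only [sh]
      congr 1
      have e := h1 0 ht
      rw [promo_zero, hS.zero, zero_add, zero_add] at e
      by_cases hx : x < r
      · rw [ext_lt _ _ _ _ ht hx, e]
        simp only [eV, Fin.ext_iff, h0]
      · simp only [ext, hx, dif_neg, not_false_eq_true]
        rw [if_neg]
        have := (b 0).2
        omega
  · obtain ⟨h0, h1, h2, h3⟩ := hb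
    refine ⟨Dsc (r - 1) (r - 1) (sh (ext t S)), Phi_Dsc hU _ _ le_rfl, ?_⟩
    have core := dsc_core (sh (ext t S)) (fun k x => ext t S (k + 1) x) (fun k => (b k : ℕ)) t (r - 1)
      hU h0 ?_ ?_ ?_ ?_ ?_ (r - 1) le_rfl
    · intro k hk
      funext x
      have hbk := (b k).2
      rw [core k hk x, max_eq_left (by omega)]
      by_cases hx : x < r
      · rw [ext_lt _ _ _ _ (by omega) hx, ext_lt _ _ _ _ (by omega) hx, h1 k hk]
        simp only [Pi.add_apply, eV, Fin.ext_iff]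
      · simp only [ext, hx, dif_neg, not_false_eq_true]
        rw [if_neg (by omega)]; rfl
    · intro k hk
      have hbk := (b k).2
      try simp only
      omega
    · intro k hk
      obtain ⟨h4, h5⟩ := h3 k hk
      refine ⟨h4, fun x hx1 hx2 => ?_⟩
      have hxr : x < r := by have := (b k).2; (try simp only at hx2); omega
      try simp only
      rw [ext_lt _ _ _ _ (by omega) hxr, ext_lt _ _ _ _ (by omega) (b k).2]
      have a1 := hS.anti (k + 2) (by omega) (show ⟨x, hxr⟩ ≤ b k from hx2)
      have a2 := hS.anti (k + 2) (by omega) (show b (k + 1) ≤ ⟨x, hxr⟩ from hx1)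
      simp only [Fin.eta]
      change S (k + 2) _ = S (k + 2) _
      omega
    · intro k hk y hy
      try simp only
      have hb := (b k).2
      try simp only at hy
      have hxr : y + 1 < r := by omega
      have hyr : y < r := by omega
      rw [ext_lt _ _ _ _ (by omega) hxr, ext_lt _ _ _ _ (by omega) hyr]
      have e : (⟨y + 1, hxr⟩ : Fin r) = b k := Fin.ext hy
      rw [e]
      exact h2 k hk ⟨y, hyr⟩ (by rw [Fin.lt_def]; simp only; omega)
    · intro k hk i hi
      have := ext_dom hS i hi (k + 1)
      simp only [al] at this
      try simp only
      omega
    · intro k hk x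
      simp only [sh]
      rw [sub_eq_add_neg]
      congr 1
      have e := h1 0 ht
      rw [promo_zero, hS.zero, zero_add] at e
      by_cases hx : x < r
      · rw [ext_lt _ _ _ _ ht hx, ← h0]
        have e' := congrFun e ⟨x, hx⟩
        simp only [Pi.add_apply, eV, Fin.ext_iff, Pi.zero_apply] at e'
        omega
      · simp only [ext, hx, dif_neg, not_false_eq_true]
        rw [if_neg]
        · rfl
        · have := (b 0).2
          omega

lemma PE_succ {r : ℕ} (t : ℕ) (S : ℕ → GP r) (u : ℕ) : PE t S (u + 1) = promo t (PE t S u) := by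
  simp only [PE, Function.iterate_succ_apply']

lemma PE_good {r t : ℕ} {S : ℕ → GP r} (hS : Good r t S) (ht : 1 ≤ t) (u : ℕ) :
    Good r t (PE t S u) := by
  induction u with
  | zero => exact hS
  | succ u ih => rw [PE_succ]; exact promo_good ih ht

lemma PE_end {r t : ℕ} (S : ℕ → GP r) (ht : 1 ≤ t) (u : ℕ) : PE t S u t = S t := by
  induction u with
  | zero => rfl
  | succ u ih => rw [PE_succ, promo_high _ ht _ _ le_rfl, ih]

lemma sh_iter_UU {η : Pth} (h : UU η) (u : ℕ) : UU (sh^[u] η) := by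
  induction u with
  | zero => exact h
  | succ u ih => rw [Function.iterate_succ_apply']; exact sh_UU ih

lemma sh_iter (η : Pth) (h : ∀ j, η 0 j = 0) (u k x : ℕ) : (sh^[u] η) k x = η (k + u) x - η u x := by
  induction u generalizing k with
  | zero => simp [h]
  | succ u ih =>
    rw [Function.iterate_succ_apply', sh, ih, ih]
    have e1 : k + 1 + u = k + (u + 1) := by omega
    have e2 : 1 + u = u + 1 := by omega
    rw [e1, e2]; ring

lemma PE_phi {r t : ℕ} {S : ℕ → GP r} (hS : Good r t S) (ht : 1 ≤ t) (u : ℕ) (hu : u ≤ t) :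
    ∀ k ≤ t - u, ext t (PE t S u) k = Phi (r - 1) (sh^[u] (ext t S)) k := by
  have hU := ext_UU hS
  induction u with
  | zero =>
    intro k _
    rw [Function.iterate_zero, id, Phi_dom hU.1 _ (ext_dom hS)]; rfl
  | succ u ih =>
    have ih := ih (by omega)
    intro k hk
    rw [PE_succ, ← row_phi (PE_good hS ht u) ht k (by omega)]
    rw [Phi_congr (r - 1) _ (sh (Phi (r - 1) (sh^[u] (ext t S)))) k _ k le_rfl]
    · rw [Phi_sh_Phi (sh_iter_UU hU u) _ _ le_rfl, Function.iterate_succ_apply']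
    · intro s hs
      funext x
      simp only [sh]
      rw [ih (s + 1) (by omega), ih 1 (by omega)]

lemma PE_dual {r t : ℕ} {S : ℕ → GP r} (hS : Good r t S) (ht : 1 ≤ t) (m : ℤ)
    (hm : ∀ i, S t i = m) (u : ℕ) (hu : u ≤ t) (x : Fin r) :
    PE t S u (t - u) x = m - S u x.rev := by
  have hU := ext_UU hS
  have hx := x.2
  have h1 := congrFun (PE_phi hS ht u hu (t - u) le_rfl) x
  rw [ext_lt _ _ _ _ (by omega) hx, Phi_low _ _ _ _ _ (by omega)] at h1
  · simp only [Fin.eta] at h1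
    have e : t - u + u = t := by omega
    rw [h1, sh_iter _ hU.1, e, ext_lt _ _ _ _ le_rfl (by omega), ext_lt _ _ _ _ hu (by omega), hm]
    congr 2
    rw [Fin.ext_iff, Fin.val_rev]
    simp only
    omega
  · intro i hi s hs
    have h2 := ext_dom hS i hi (s + u)
    have e : t - u + u = t := by omega
    simp only [al, sh_iter _ hU.1, e] at h2 ⊢
    rw [ext_lt t S t _ le_rfl (by omega), ext_lt t S t _ le_rfl (by omega), hm, hm]
    omega

lemma PE_period {r t : ℕ} {S : ℕ → GP r} (hS : Good r t S) (ht : 1 ≤ t) (m : ℤ)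
    (hm : ∀ i, S t i = m) (a : ℕ) (ha : a ≤ t) : PE t S t a = S a := by
  funext x
  have h1 := PE_dual (PE_good hS ht a) ht m (by rw [PE_end _ ht]; exact hm) (t - a) (by omega) x
  rw [PE_dual hS ht m hm a ha] at h1
  have e : PE t (PE t S a) (t - a) = PE t S t := by
    simp only [PE]
    rw [← Function.iterate_add_apply]
    congr 2
    omega
  have e2 : t - (t - a) = a := by omega
  rw [e, e2, Fin.rev_rev] at h1
  rw [h1]; ring

/-! ### Columns of the growth diagram -/

lemma pSum_add {r : ℕ} (v w : GP r) (i : ℕ) : pSum (v + w) i = pSum v i + pSum w i := by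
  simp only [pSum, Pi.add_apply, Finset.sum_add_distrib]

lemma pSum_eV {r : ℕ} (b : Fin r) (i : ℕ) : pSum (eV b) i = if (b : ℕ) < i then 1 else 0 := by
  simp only [pSum, eV, Finset.sum_ite_eq', Finset.mem_filter, Finset.mem_univ, true_and]

lemma eV_inj {r : ℕ} {a b : Fin r} (h : (eV a : GP r) = eV b) : a = b := by
  have := congrFun h a
  simp only [eV, if_pos] at this
  by_contra hne
  rw [if_neg hne] at this
  omega

lemma eV_add_ne {r : ℕ} (a b : Fin r) {x y : GP r} (h1 : x = y + eV a) (h2 : y = x + eV b) :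
    False := by
  have e1 := congrFun h1 a
  have e2 := congrFun h2 a
  simp only [Pi.add_apply, eV, if_pos] at e1 e2
  split_ifs at e2 <;> omega

lemma cell {r t : ℕ} {S : ℕ → GP r} (hS : Good r t S) (ht : 1 ≤ t) (u k : ℕ) (hk : 1 ≤ k)
    (hkt : k < t) (i : ℕ) :
    (recorded r t S i (u + 1) (u + 1 + k) ∧
      (pSum (PE t S u (k + 1)) i - pSum (PE t S u k) i) -
        (pSum (PE t S (u + 1) k) i - pSum (PE t S (u + 1) (k - 1)) i) = -1) ∨
    (¬ recorded r t S i (u + 1) (u + 1 + k) ∧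
      (pSum (PE t S u (k + 1)) i - pSum (PE t S u k) i) -
        (pSum (PE t S (u + 1) k) i - pSum (PE t S (u + 1) (k - 1)) i) = 0) := by
  obtain ⟨k, rfl⟩ : ∃ k', k = k' + 1 := ⟨k - 1, by omega⟩
  have e1 : u + 1 + (k + 1) - (u + 1) = k + 1 := by omega
  have e2 : u + 1 - 1 = u := by omega
  have e3 : k + 1 - 1 = k := by omega
  simp only [recorded, e1, e2, e3]
  obtain ⟨b, hb | hb⟩ := row_exists (PE_good hS ht u) ht
  · rw [← PE_succ] at hb
    obtain ⟨-, h1, -, h3⟩ := hb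
    have s1 := h1 k (by omega)
    have s2 := h1 (k + 1) hkt
    have hm : (b k : ℕ) ≤ b (k + 1) := (h3 k hkt).1
    have q1 := congrArg (fun v => pSum v i) s1
    have q2 := congrArg (fun v => pSum v i) s2
    simp only [pSum_add, pSum_eV] at q1 q2
    by_cases hc : (b k : ℕ) < i ∧ i ≤ (b (k + 1) : ℕ)
    · left
      refine ⟨⟨b k, b (k + 1), Or.inl ⟨s1, s2, hc⟩⟩, ?_⟩
      rw [if_pos hc.1] at q1
      rw [if_neg (by omega)] at q2
      omega
    · right
      constructor
      · rintro ⟨a', b', ⟨g1, g2, g3, g4⟩ | ⟨g1, g2, g3, g4⟩⟩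
        · rw [g1] at s1
          rw [g2] at s2
          have := eV_inj (add_left_cancel s1)
          have := eV_inj (add_left_cancel s2)
          subst_vars
          exact hc ⟨g3, g4⟩
        · exact eV_add_ne _ _ s1 g1
      · split_ifs at q1 q2 <;> omega
  · rw [← PE_succ] at hb
    obtain ⟨-, h1, -, h3⟩ := hb
    have s1 := h1 k (by omega)
    have s2 := h1 (k + 1) hkt
    have hm : (b (k + 1) : ℕ) ≤ b k := (h3 k hkt).1
    have q1 := congrArg (fun v => pSum v i) s1
    have q2 := congrArg (fun v => pSum v i) s2
    simp only [pSum_add, pSum_eV] at q1 q2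
    by_cases hc : (b (k + 1) : ℕ) < i ∧ i ≤ (b k : ℕ)
    · left
      refine ⟨⟨b k, b (k + 1), Or.inr ⟨s1, s2, hc⟩⟩, ?_⟩
      rw [if_pos hc.1] at q2
      rw [if_neg (by omega)] at q1
      omega
    · right
      constructor
      · rintro ⟨a', b', ⟨g1, g2, g3, g4⟩ | ⟨g1, g2, g3, g4⟩⟩
        · exact eV_add_ne _ _ s1 g1
        · rw [g1] at s1
          rw [g2] at s2
          have := eV_inj (add_left_cancel s1)
          have := eV_inj (add_left_cancel s2)
          subst_vars
          exact hc ⟨g3, g4⟩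
      · split_ifs at q1 q2 <;> omega

/-- Increment of the prefix sum in column `a + t` of the growth diagram. -/
def gcol {r : ℕ} (t : ℕ) (S : ℕ → GP r) (i a u : ℕ) : ℤ :=
  pSum (PE t S u (a + t - u)) i - pSum (PE t S u (a + t - u - 1)) i

lemma gcol_step {r t : ℕ} {S : ℕ → GP r} (hS : Good r t S) (ht : 1 ≤ t) (i a u : ℕ) (ha : 1 ≤ a)
    (hau : a ≤ u) (hut : u < t) :
    (recorded r t S i (u + 1) (a + t) ∧ gcol t S i a (u + 1) = gcol t S i a u + 1) ∨
    (¬ recorded r t S i (u + 1) (a + t) ∧ gcol t S i a (u + 1) = gcol t S i a u) := by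
  have h := cell hS ht u (a + t - (u + 1)) (by omega) (by omega) i
  have e1 : u + 1 + (a + t - (u + 1)) = a + t := by omega
  have e2 : a + t - (u + 1) + 1 = a + t - u := by omega
  have e3 : a + t - u - 1 = a + t - (u + 1) := by omega
  rw [e1, e2] at h
  simp only [gcol, e3]
  rcases h with ⟨h1, h2⟩ | ⟨h1, h2⟩
  · left; exact ⟨h1, by omega⟩
  · right; exact ⟨h1, by omega⟩

lemma gcol_iff {r t : ℕ} {S : ℕ → GP r} (hS : Good r t S) (ht : 1 ≤ t) (i a s : ℕ) (ha : 1 ≤ a)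
    (hs : a ≤ s) (hst : s ≤ t) :
    gcol t S i a a ≤ gcol t S i a s ∧
    ((∃ u, a < u ∧ u ≤ s ∧ recorded r t S i u (a + t)) ↔ gcol t S i a a < gcol t S i a s) := by
  induction s, hs using Nat.le_induction with
  | base =>
    refine ⟨le_rfl, ⟨?_, fun h => absurd h (lt_irrefl _)⟩⟩
    rintro ⟨u, h1, h2, -⟩
    omega
  | succ s hs ih =>
    obtain ⟨h1, h2⟩ := ih (by omega)
    rcases gcol_step hS ht i a s ha hs (by omega) with ⟨h3, h4⟩ | ⟨h3, h4⟩
    · refine ⟨by omega, ⟨fun _ => by omega, fun _ => ⟨s + 1, by omega, le_rfl, h3⟩⟩⟩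
    · refine ⟨by omega, ?_⟩
      rw [h4, ← h2]
      constructor
      · rintro ⟨u, g1, g2, g3⟩
        refine ⟨u, g1, ?_, g3⟩
        rcases Nat.lt_or_ge s u with h | h
        · have : u = s + 1 := by omega
          subst this
          exact absurd g3 h3
        · exact h
      · rintro ⟨u, g1, g2, g3⟩
        exact ⟨u, g1, by omega, g3⟩

lemma not_recorded_top {r t : ℕ} {S : ℕ → GP r} (u v : ℕ) : ¬ recorded r t S r u v := by
  rintro ⟨a, b, ⟨-, -, -, h⟩ | ⟨-, -, -, h⟩⟩
  · have := b.2; omega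
  · have := a.2; omega

/-- The last step of a good path with constant endpoint. -/
lemma last_step {r t : ℕ} {S : ℕ → GP r} (hS : Good r t S) (ht : 1 ≤ t) (m : ℤ)
    (hm : ∀ i, S t i = m) (i : ℕ) (hi : 1 ≤ i) (hir : i ≤ r - 1) :
    (pSum (S t) i - pSum (S (t - 1)) i = 0 ∧ pSum (S t) r - pSum (S (t - 1)) r = 1) ∨
    (pSum (S t) i - pSum (S (t - 1)) i = -1 ∧ pSum (S t) r - pSum (S (t - 1)) r = -1) := by
  have et : t - 1 + 1 = t := by omega
  have ha := hS.anti (t - 1) (by omega)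
  obtain ⟨d, hd | hd⟩ := hS.step (t - 1) (by omega)
  · rw [et] at hd
    left
    have hdr := d.2
    have hz : (d : ℕ) = r - 1 := by
      have h2 := ha (show d ≤ (⟨r - 1, by omega⟩ : Fin r) from by
        rw [Fin.le_def]; simp only; omega)
      have e1 := congrFun hd d
      have e2 := congrFun hd ⟨r - 1, by omega⟩
      simp only [Pi.add_apply, eV, if_pos, hm] at e1 e2
      split_ifs at e2 with h3
      · rw [← h3]
      · omega
    rw [hd, pSum_add, pSum_add, pSum_eV, pSum_eV, if_neg (by omega), if_pos (by omega)]
    constructor <;> ring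
  · rw [et] at hd
    right
    have hdr := d.2
    have hz : (d : ℕ) = 0 := by
      have h2 := ha (show (⟨0, by omega⟩ : Fin r) ≤ d from Nat.zero_le _)
      have e1 := congrFun hd d
      have e2 := congrFun hd ⟨0, by omega⟩
      simp only [Pi.add_apply, eV, if_pos, hm] at e1 e2
      split_ifs at e2 with h3
      · rw [← h3]
      · omega
    rw [hd, pSum_add, pSum_add, pSum_eV, pSum_eV, if_pos (by omega), if_pos (by omega)]
    constructor <;> ring

/-- The theorem for oscillating tableaux. -/
lemma main_osc {r t : ℕ} {S : ℕ → GP r} (hS : Good r t S) (ht : 1 ≤ t) (m : ℤ)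
    (hm : ∀ i, S t i = m) (i : ℕ) (hi : 1 ≤ i) (hir : i ≤ r - 1) (a : ℕ) (ha : 1 ≤ a)
    (hat : a ≤ t) :
    (∃ u, a < u ∧ u ≤ t ∧ recorded r t S i u (a + t)) ↔
      ∃ j : Fin r, (S a = S (a - 1) + eV j ∧ (j : ℕ) + 1 ≤ i) ∨
          (S (a - 1) = S a + eV j ∧ i < (j : ℕ) + 1) := by
  rw [(gcol_iff hS ht i a t ha hat le_rfl).2]
  have hG : gcol t S r a t = gcol t S r a a := by
    obtain ⟨h1, h2⟩ := gcol_iff hS ht r a t ha hat le_rfl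
    by_contra hne
    obtain ⟨u, -, -, h3⟩ := h2.2 (lt_of_le_of_ne h1 (Ne.symm hne))
    exact not_recorded_top _ _ h3
  have hl := last_step (PE_good hS ht a) ht m (by rw [PE_end _ ht]; exact hm) i hi hir
  have e1 : a + t - t = a := by omega
  have e2 : a + t - a = t := by omega
  simp only [gcol, e1, e2, PE_period hS ht m hm a hat,
    PE_period hS ht m hm (a - 1) (by omega)] at hG ⊢
  have et : a - 1 + 1 = a := by omega
  obtain ⟨d, hd⟩ := hS.step (a - 1) (by omega)
  rw [et] at hd
  have hdr := d.2
  rcases hd with hd | hd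
  · have q1 := congrArg (fun v => pSum v i) hd
    have q2 := congrArg (fun v => pSum v r) hd
    simp only [pSum_add, pSum_eV] at q1 q2
    rw [if_pos hdr] at q2
    rcases hl with ⟨l1, l2⟩ | ⟨l1, l2⟩
    swap
    · omega
    constructor
    · intro h
      refine ⟨d, Or.inl ⟨hd, ?_⟩⟩
      split_ifs at q1 <;> omega
    · rintro ⟨j, ⟨g1, g2⟩ | ⟨g1, g2⟩⟩
      · rw [hd] at g1
        have := eV_inj (add_left_cancel g1)
        subst this
        rw [if_pos (by omega)] at q1
        omega
      · exact (eV_add_ne _ _ hd g1).elim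
  · have q1 := congrArg (fun v => pSum v i) hd
    have q2 := congrArg (fun v => pSum v r) hd
    simp only [pSum_add, pSum_eV] at q1 q2
    rw [if_pos hdr] at q2
    rcases hl with ⟨l1, l2⟩ | ⟨l1, l2⟩
    · omega
    constructor
    · intro h
      refine ⟨d, Or.inr ⟨hd, ?_⟩⟩
      split_ifs at q1 <;> omega
    · rintro ⟨j, ⟨g1, g2⟩ | ⟨g1, g2⟩⟩
      · exact (eV_add_ne _ _ hd g1).elim
      · rw [hd] at g1
        have := eV_inj (add_left_cancel g1)
        subst this
        rw [if_neg (by omega)] at q1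
        omega

/-! ### The oscillization has unit steps -/

lemma rank_ex {r : ℕ} (A : Finset (Fin r)) (f : Fin r → ℕ)
    (hinj : ∀ x ∈ A, ∀ y ∈ A, f x = f y → x = y)
    (hf : ∀ x ∈ A, 1 ≤ f x ∧ f x ≤ A.card) (j : ℕ) (hj : j < A.card) :
    ∃ x ∈ A, f x = j + 1 := by
  have h := Finset.surj_on_of_inj_on_of_card_le (s := A) (t := Finset.Icc 1 A.card)
    (fun x _ => f x) (fun x hx => Finset.mem_Icc.2 (hf x hx))
    (fun x y hx hy h => hinj x hx y hy h) (by simp) (j + 1)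
    (Finset.mem_Icc.2 ⟨by omega, by omega⟩)
  obtain ⟨x, hx, h⟩ := h
  exact ⟨x, hx, h.symm⟩

lemma rank_step {r : ℕ} (A : Finset (Fin r)) (f : Fin r → ℕ)
    (hinj : ∀ x ∈ A, ∀ y ∈ A, f x = f y → x = y)
    (hf : ∀ x ∈ A, 1 ≤ f x ∧ f x ≤ A.card) (j : ℕ) (hj : j < A.card) :
    ∃ x, (indV (A.filter fun i => f i ≤ j + 1) : GP r) =
      indV (A.filter fun i => f i ≤ j) + eV x := by
  obtain ⟨x, hx, h⟩ := rank_ex A f hinj hf j hj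
  refine ⟨x, ?_⟩
  funext i
  simp only [indV, Pi.add_apply, eV, Finset.mem_filter]
  by_cases hi : i = x
  · subst hi
    rw [if_pos ⟨hx, by omega⟩, if_neg (by omega), if_pos rfl]; rfl
  · rw [if_neg hi, add_zero]
    by_cases hA : i ∈ A
    · have : f i ≠ j + 1 := fun h' => hi (hinj i hA x hx (by omega))
      by_cases hc : f i ≤ j
      · rw [if_pos ⟨hA, by omega⟩, if_pos ⟨hA, hc⟩]
      · rw [if_neg (by omega), if_neg (by omega)]
    · simp [hA]

/-- Rank of a row inside a set, counted from the top. -/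
def rkU {r : ℕ} (A : Finset (Fin r)) (i : Fin r) : ℕ := (A.filter fun i' => i' ≤ i).card

/-- Rank of a row inside a set, counted from the bottom. -/
def rkD {r : ℕ} (A : Finset (Fin r)) (i : Fin r) : ℕ := (A.filter fun i' => i ≤ i').card

lemma rkU_mono {r : ℕ} (A : Finset (Fin r)) {x y : Fin r} (h : x ≤ y) : rkU A x ≤ rkU A y := by
  apply Finset.card_le_card
  intro z
  simp only [Finset.mem_filter]
  exact fun hz => ⟨hz.1, hz.2.trans h⟩

lemma rkD_mono {r : ℕ} (A : Finset (Fin r)) {x y : Fin r} (h : x ≤ y) : rkD A y ≤ rkD A x := by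
  apply Finset.card_le_card
  intro z
  simp only [Finset.mem_filter]
  exact fun hz => ⟨hz.1, h.trans hz.2⟩

lemma rkU_lt {r : ℕ} (A : Finset (Fin r)) {x y : Fin r} (hy : y ∈ A) (h : x < y) :
    rkU A x < rkU A y := by
  apply Finset.card_lt_card
  refine ⟨fun z => ?_, fun hs => ?_⟩
  · simp only [Finset.mem_filter]
    exact fun hz => ⟨hz.1, hz.2.trans h.le⟩
  · have := hs (Finset.mem_filter.2 ⟨hy, le_rfl⟩)
    simp only [Finset.mem_filter] at this
    exact absurd this.2 (not_le.2 h)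

lemma rkD_lt {r : ℕ} (A : Finset (Fin r)) {x y : Fin r} (hx : x ∈ A) (h : x < y) :
    rkD A y < rkD A x := by
  apply Finset.card_lt_card
  refine ⟨fun z => ?_, fun hs => ?_⟩
  · simp only [Finset.mem_filter]
    exact fun hz => ⟨hz.1, h.le.trans hz.2⟩
  · have := hs (Finset.mem_filter.2 ⟨hx, le_rfl⟩)
    simp only [Finset.mem_filter] at this
    exact absurd this.2 (not_le.2 h)

lemma rkU_inj {r : ℕ} (A : Finset (Fin r)) :
    ∀ x ∈ A, ∀ y ∈ A, rkU A x = rkU A y → x = y := by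
  intro x hx y hy h
  rcases lt_trichotomy x y with h1 | h1 | h1
  · have := rkU_lt A hy h1; omega
  · exact h1
  · have := rkU_lt A hx h1; omega

lemma rkD_inj {r : ℕ} (A : Finset (Fin r)) :
    ∀ x ∈ A, ∀ y ∈ A, rkD A x = rkD A y → x = y := by
  intro x hx y hy h
  rcases lt_trichotomy x y with h1 | h1 | h1
  · have := rkD_lt A hx h1; omega
  · exact h1
  · have := rkD_lt A hy h1; omega

lemma rkU_bd {r : ℕ} (A : Finset (Fin r)) : ∀ x ∈ A, 1 ≤ rkU A x ∧ rkU A x ≤ A.card := by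
  intro x hx
  exact ⟨Finset.card_pos.2 ⟨x, Finset.mem_filter.2 ⟨hx, le_rfl⟩⟩,
    Finset.card_le_card (Finset.filter_subset _ _)⟩

lemma rkD_bd {r : ℕ} (A : Finset (Fin r)) : ∀ x ∈ A, 1 ≤ rkD A x ∧ rkD A x ≤ A.card := by
  intro x hx
  exact ⟨Finset.card_pos.2 ⟨x, Finset.mem_filter.2 ⟨hx, le_rfl⟩⟩,
    Finset.card_le_card (Finset.filter_subset _ _)⟩

lemma filt_plus {r : ℕ} (μ : GP r) (A : Finset (Fin r)) :
    (Finset.univ.filter fun i' : Fin r => (μ + indV A) i' ≠ μ i') = A := by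
  ext i
  simp [indV]

lemma filt_minus {r : ℕ} (μ : GP r) (A : Finset (Fin r)) :
    (Finset.univ.filter fun i' : Fin r => (μ - indV A) i' ≠ μ i') = A := by
  ext i
  simp [indV]

lemma osc_plus {r : ℕ} (μ : GP r) (A : Finset (Fin r)) (j : ℕ) :
    oscStep μ (μ + indV A) j = μ + indV (A.filter fun i => rkU A i ≤ j) := by
  funext i
  simp only [oscStep, filt_plus]
  by_cases hi : i ∈ A
  · have : μ i < (μ + indV A) i := by simp [indV, hi]
    simp only [if_pos this]
    have e : (μ + indV (A.filter fun i => rkU A i ≤ j)) i =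
        μ i + (if i ∈ (A.filter fun i => rkU A i ≤ j) then 1 else 0) := rfl
    have e2 : (μ + indV A) i = μ i + (if i ∈ A then 1 else 0) := rfl
    rw [e, e2, if_pos hi]
    by_cases hc : rkU A i ≤ j
    · rw [if_pos ⟨hi, hc⟩, if_pos (Finset.mem_filter.2 ⟨hi, hc⟩)]
    · have hn : ¬ (i ∈ (A.filter fun i => rkU A i ≤ j)) := fun h => hc (Finset.mem_filter.1 h).2
      rw [if_neg (fun h => hc h.2), if_neg hn]
      simp
  · simp [hi, indV]

lemma osc_minus {r : ℕ} (μ : GP r) (A : Finset (Fin r)) (j : ℕ) :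
    oscStep μ (μ - indV A) j = μ - indV (A.filter fun i => rkD A i ≤ j) := by
  funext i
  simp only [oscStep, filt_minus]
  by_cases hi : i ∈ A
  · have : ¬ μ i < (μ - indV A) i := by simp [indV, hi]
    simp only [if_neg this]
    have e : (μ - indV (A.filter fun i => rkD A i ≤ j)) i =
        μ i - (if i ∈ (A.filter fun i => rkD A i ≤ j) then 1 else 0) := rfl
    have e2 : (μ - indV A) i = μ i - (if i ∈ A then 1 else 0) := rfl
    rw [e, e2, if_pos hi]
    by_cases hc : rkD A i ≤ j
    · rw [if_pos ⟨hi, hc⟩, if_pos (Finset.mem_filter.2 ⟨hi, hc⟩)]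
    · have hn : ¬ (i ∈ (A.filter fun i => rkD A i ≤ j)) := fun h => hc (Finset.mem_filter.1 h).2
      rw [if_neg (fun h => hc h.2), if_neg hn]
      simp
  · simp [hi, indV]

lemma osc_zero {r : ℕ} (μ lam : GP r) : oscStep μ lam 0 = μ := by
  funext i
  simp only [oscStep]
  rw [if_neg]
  rintro ⟨h1, h2⟩
  split_ifs at h2
  · rw [Nat.le_zero, Finset.card_eq_zero] at h2
    have : i ∈ (∅ : Finset (Fin r)) := h2 ▸ Finset.mem_filter.2 ⟨h1, le_rfl⟩
    simp at this
  · rw [Nat.le_zero, Finset.card_eq_zero] at h2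
    have : i ∈ (∅ : Finset (Fin r)) := h2 ▸ Finset.mem_filter.2 ⟨h1, le_rfl⟩
    simp at this

lemma osc_full {r : ℕ} (μ lam : GP r) :
    oscStep μ lam (Finset.univ.filter fun i' : Fin r => lam i' ≠ μ i').card = lam := by
  funext i
  simp only [oscStep]
  by_cases h : lam i = μ i
  · simp [h]
  · rw [if_pos]
    refine ⟨by simpa using h, ?_⟩
    split_ifs <;> exact Finset.card_le_card (Finset.filter_subset _ _)

lemma osc_props {r : ℕ} {c : ℤ} {μ lam : GP r} (h : colStep r c μ lam) (hμ : Antitone μ)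
    (hl : Antitone lam) :
    (Finset.univ.filter fun i' : Fin r => lam i' ≠ μ i').card = c.natAbs ∧
    (∀ j, Antitone (oscStep μ lam j)) ∧
    (∀ j < c.natAbs, ∃ x, oscStep μ lam (j + 1) = oscStep μ lam j + eV x ∨
      oscStep μ lam j = oscStep μ lam (j + 1) + eV x) := by
  obtain ⟨A, hA, h⟩ := h
  split_ifs at h
  · subst h
    rw [filt_plus]
    refine ⟨hA, fun j => ?_, fun j hj => ?_⟩
    · rw [osc_plus]
      intro p q hpq
      have h1 := hμ hpq
      have h2 := hl hpq
      have h3 := rkU_mono A hpq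
      simp only [Pi.add_apply, indV, Finset.mem_filter] at h1 h2 ⊢
      by_cases hp : p ∈ A <;> by_cases hq : q ∈ A <;> simp only [hp, hq, true_and, false_and,
        if_true, if_false] at h2 ⊢ <;> (try split_ifs) <;> omega
    · obtain ⟨x, hx⟩ := rank_step A (rkU A) (rkU_inj A) (rkU_bd A) j (by omega)
      refine ⟨x, Or.inl ?_⟩
      rw [osc_plus, osc_plus, hx, add_assoc]
  · subst h
    rw [filt_minus]
    refine ⟨hA, fun j => ?_, fun j hj => ?_⟩
    · rw [osc_minus]
      intro p q hpq
      have h1 := hμ hpq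
      have h2 := hl hpq
      have h3 := rkD_mono A hpq
      simp only [Pi.sub_apply, indV, Finset.mem_filter] at h1 h2 ⊢
      by_cases hp : p ∈ A <;> by_cases hq : q ∈ A <;> simp only [hp, hq, true_and, false_and,
        if_true, if_false] at h2 ⊢ <;> (try split_ifs) <;> omega
    · obtain ⟨x, hx⟩ := rank_step A (rkD A) (rkD_inj A) (rkD_bd A) j (by omega)
      refine ⟨x, Or.inr ?_⟩
      rw [osc_minus, osc_minus, hx]
      abel

lemma cum_succ {r : ℕ} (T : ℕ → GP r) (j : ℕ) : cum T (j + 1) = cum T j + stepSize T j := by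
  simp only [cum, Finset.sum_range_succ]

lemma cum_mono {r : ℕ} (T : ℕ → GP r) : Monotone (cum T) :=
  monotone_nat_of_le_succ (fun j => by rw [cum_succ]; omega)

lemma stdIdx_spec {r : ℕ} (n : ℕ) (T : ℕ → GP r) (k : ℕ) :
    stdIdx n T k ≤ n ∧ cum T (stdIdx n T k) ≤ k ∧ ∀ j ≤ n, cum T j ≤ k → j ≤ stdIdx n T k := by
  have hne : ((Finset.range (n + 1)).filter fun j => cum T j ≤ k).Nonempty :=
    ⟨0, Finset.mem_filter.2 ⟨Finset.mem_range.2 (by omega), by simp [cum]⟩⟩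
  obtain ⟨x, hx, he⟩ := Finset.exists_mem_eq_sup _ hne id
  have he' : stdIdx n T k = x := he
  rw [Finset.mem_filter, Finset.mem_range] at hx
  refine ⟨by omega, by rw [he']; exact hx.2, fun j hj hc => ?_⟩
  exact Finset.le_sup (f := id) (Finset.mem_filter.2 ⟨Finset.mem_range.2 (by omega), hc⟩)

lemma const_of_cum {r : ℕ} (T : ℕ → GP r) (j J : ℕ) (hj : j ≤ J) (h : cum T J = cum T j) :
    T J = T j := by
  induction J, hj using Nat.le_induction with
  | base => rfl
  | succ J hJ ih =>
    have h1 := cum_mono T hJ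
    have h2 := cum_succ T J
    rw [← ih (by omega)]
    have h3 : stepSize T J = 0 := by omega
    rw [stepSize, Finset.card_eq_zero, Finset.filter_eq_empty_iff] at h3
    funext i
    have := h3 (Finset.mem_univ i)
    simpa using this

lemma stdT_cum {r : ℕ} (n : ℕ) (T : ℕ → GP r) (j : ℕ) (hj : j ≤ n) :
    stdT n T (cum T j) = T j := by
  obtain ⟨h1, h2, h3⟩ := stdIdx_spec n T (cum T j)
  have h4 := h3 j hj le_rfl
  have h5 : cum T (stdIdx n T (cum T j)) = cum T j := le_antisymm h2 (cum_mono T h4)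
  have h6 := const_of_cum T _ _ h4 h5
  simp only [stdT]
  split_ifs with h
  · rw [← h6, h]
  · rw [h5, Nat.sub_self, osc_zero, h6]

lemma stdT_eq {r : ℕ} (n : ℕ) (T : ℕ → GP r) (j k : ℕ) (hj : j < n) (h1 : cum T j ≤ k)
    (h2 : k ≤ cum T (j + 1)) :
    stdT n T k = oscStep (T j) (T (j + 1)) (k - cum T j) := by
  rcases Nat.lt_or_ge k (cum T (j + 1)) with h | h
  · obtain ⟨g1, g2, g3⟩ := stdIdx_spec n T k
    have g4 := g3 j hj.le h1
    have g5 : stdIdx n T k = j := by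
      by_contra hne
      have := cum_mono T (show j + 1 ≤ stdIdx n T k by omega)
      omega
    simp only [stdT, g5]
    rw [if_neg (by omega)]
  · have e : k = cum T (j + 1) := le_antisymm h2 h
    have e2 : cum T (j + 1) - cum T j = stepSize T j := by rw [cum_succ]; omega
    rw [e, stdT_cum n T _ hj, e2]
    exact (osc_full _ _).symm

lemma stepSize_eq {r n : ℕ} {T : ℕ → GP r} {c : ℕ → ℤ} (hT : IsFT r n T c) (j : ℕ) (hj : j < n) :
    stepSize T j = (c j).natAbs :=
  (osc_props (hT.1.2 j hj) (hT.1.1 j hj.le) (hT.1.1 (j + 1) hj)).1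

lemma cum_eq {r n : ℕ} {T : ℕ → GP r} {c : ℕ → ℤ} (hT : IsFT r n T c) :
    cum T n = ∑ j ∈ Finset.range n, (c j).natAbs :=
  Finset.sum_congr rfl (fun j hj => stepSize_eq hT j (Finset.mem_range.1 hj))

lemma loc {r : ℕ} (n : ℕ) (T : ℕ → GP r) (k : ℕ) (hk : k < cum T n) :
    ∃ j < n, cum T j ≤ k ∧ k < cum T (j + 1) := by
  obtain ⟨g1, g2, g3⟩ := stdIdx_spec n T k
  have hlt : stdIdx n T k < n := by
    rcases Nat.lt_or_ge (stdIdx n T k) n with h | h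
    · exact h
    · have := cum_mono T h
      omega
  refine ⟨_, hlt, g2, ?_⟩
  by_contra h
  have := g3 (stdIdx n T k + 1) hlt (by omega)
  omega

lemma stdT_good {r n : ℕ} {T : ℕ → GP r} {c : ℕ → ℤ} (hT : IsFT r n T c) :
    Good r (cum T n) (stdT n T) := by
  refine ⟨?_, fun k hk => ?_, fun k hk => ?_⟩
  · have := stdT_cum n T 0 (Nat.zero_le _)
    rw [hT.2] at this
    simpa [cum] using this
  · rcases Nat.lt_or_ge k (cum T n) with h | h
    · obtain ⟨j, hj, h1, h2⟩ := loc n T k h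
      rw [stdT_eq n T j k hj h1 h2.le]
      exact (osc_props (hT.1.2 j hj) (hT.1.1 j hj.le) (hT.1.1 (j + 1) hj)).2.1 _
    · have e : k = cum T n := le_antisymm hk h
      rw [e, stdT_cum n T n le_rfl]
      exact hT.1.1 n le_rfl
  · obtain ⟨j, hj, h1, h2⟩ := loc n T k hk
    have hs := stepSize_eq hT j hj
    have hc := cum_succ T j
    rw [stdT_eq n T j k hj h1 h2.le, stdT_eq n T j (k + 1) hj (by omega) h2]
    have e : k + 1 - cum T j = k - cum T j + 1 := by omega
    rw [e]
    exact (osc_props (hT.1.2 j hj) (hT.1.1 j hj.le) (hT.1.1 (j + 1) hj)).2.2 _ (by omega)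

lemma cum_ones {r n : ℕ} {T : ℕ → GP r} {c : ℕ → ℤ} (hT : IsFT r n T c) (hc : ∀ j < n, c j = 1)
    (k : ℕ) (hk : k ≤ n) : cum T k = k := by
  induction k with
  | zero => simp [cum]
  | succ k ih =>
    rw [cum_succ, ih (by omega), stepSize_eq hT k hk, hc k hk]
    rfl

lemma stdT_ones {r n : ℕ} {T : ℕ → GP r} {c : ℕ → ℤ} (hT : IsFT r n T c) (hc : ∀ j < n, c j = 1)
    (k : ℕ) (hk : k ≤ n) : stdT n T k = T k := by
  have := stdT_cum n T k hk
  rwa [cum_ones hT hc k hk] at this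

lemma step_ones {r n : ℕ} {T : ℕ → GP r} {c : ℕ → ℤ} (hT : IsFT r n T c) (hc : ∀ j < n, c j = 1)
    (k : ℕ) (hk : k < n) (x : Fin r) : T k ≠ T (k + 1) + eV x := by
  intro h
  obtain ⟨A, -, h2⟩ := hT.1.2 k hk
  rw [hc k hk, if_pos (by omega)] at h2
  have e1 := congrFun h x
  have e2 := congrFun h2 x
  simp only [Pi.add_apply, eV, if_true, indV] at e1 e2
  split_ifs at e2 <;> omega

lemma main_one {r n t : ℕ} {T : ℕ → GP r} {c : ℕ → ℤ}
    (hT : IsFT r n T c) (hrect : Rect r n T)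
    (ht : t = ∑ j ∈ Finset.range n, (c j).natAbs) (ht1 : 1 ≤ t)
    (i : ℕ) (hi : 1 ≤ i) (hir : i ≤ r - 1) (a : ℕ) (ha : 1 ≤ a) (hat : a ≤ t) :
    (∃ u, a < u ∧ u ≤ t ∧ PMmem r n t T i u a) ↔
        ∃ j : Fin r,
          (stdT n T a = stdT n T (a - 1) + eV j ∧ (j : ℕ) + 1 ≤ i) ∨
          (stdT n T (a - 1) = stdT n T a + eV j ∧ i < (j : ℕ) + 1) := by
  have e := cum_eq hT
  rw [← ht] at e
  have hG := stdT_good hT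
  have hE := stdT_cum n T n le_rfl
  rw [e] at hG hE
  obtain ⟨m, hm⟩ := hrect
  rw [← main_osc hG ht1 m (by rw [hE]; exact hm) i hi hir a ha hat]
  constructor
  · rintro ⟨u, h1, h2, h3⟩
    obtain ⟨-, -, -, -, -, -, -, h4⟩ := h3
    rw [if_neg (by omega)] at h4
    exact ⟨u, h1, h2, h4⟩
  · rintro ⟨u, h1, h2, h3⟩
    refine ⟨u, h1, h2, by omega, h2, ha, hat, by omega, hi, hir, ?_⟩
    rw [if_neg (by omega)]
    exact h3

/-- **Theorem (antiexcedances).** Let `T` be an `r`-row rectangular fluctuating tableau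
with `t = Σ|c_j| ≥ 1` and oscillization `std(T) = (μ^0,…,μ^t)`.  For `1 ≤ i ≤ r-1` and
`a ∈ {1,…,t}`, `a` is an antiexcedance of `prom_i(T)` (i.e. `prom_i(T)⁻¹(a) > a`,
expressed as: some `u > a` has `prom_i(T)(u) = a`) iff either the `a`-th step of
`std(T)` adds a box in one of the top `i` rows, or removes a box from one of the
bottom `r-i` rows.  In particular, for standard type `(1,…,1)` the antiexcedances of
`prom_i(T)` are exactly the entries in the first `i` rows of `T`. -/
theorem antiexcedances_of_promotion_permutations
    (r n t : ℕ) (T : ℕ → GP r) (c : ℕ → ℤ)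
    (hT : IsFT r n T c) (hrect : Rect r n T)
    (ht : t = ∑ j ∈ Finset.range n, (c j).natAbs) (ht1 : 1 ≤ t) :
    ∀ i, 1 ≤ i → i ≤ r - 1 → ∀ a, 1 ≤ a → a ≤ t →
      ((∃ u, a < u ∧ u ≤ t ∧ PMmem r n t T i u a) ↔
        ∃ j : Fin r,
          (stdT n T a = stdT n T (a - 1) + eV j ∧ (j : ℕ) + 1 ≤ i) ∨
          (stdT n T (a - 1) = stdT n T a + eV j ∧ i < (j : ℕ) + 1)) ∧
      ((∀ j < n, c j = 1) →
        ((∃ u, a < u ∧ u ≤ t ∧ PMmem r n t T i u a) ↔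
          ∃ j : Fin r, T a = T (a - 1) + eV j ∧ (j : ℕ) + 1 ≤ i)) := by
  intro i hi hir a ha hat
  have hmain := main_one hT hrect ht ht1 i hi hir a ha hat
  refine ⟨hmain, fun hc => ?_⟩
  rw [hmain]
  have e := cum_eq hT
  rw [← ht, cum_ones hT hc n le_rfl] at e
  have ea : a - 1 + 1 = a := by omega
  rw [stdT_ones hT hc a (by omega), stdT_ones hT hc (a - 1) (by omega)]
  constructor
  · rintro ⟨j, h | ⟨h, -⟩⟩
    · exact ⟨j, h⟩
    · have := step_ones hT hc (a - 1) (by omega) j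
      rw [ea] at this
      exact absurd h this
  · rintro ⟨j, h⟩
    exact ⟨j, Or.inl h⟩

end FT
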